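/- Under Condition (★), for every integer h ≥ 2, ∑_{m ∈ S_h(x)} ω(m) = (κ/ζ_M(h))·x·log log x + (κ·ℭ₁/ζ_M(h))·x + O_h(x/log x) as x → ∞, where the implied constant depends only on h and on the data P, N, κ, θ. -/

import Mathlib

open Filter Topology Asymptotics
open scoped Classical

noncomputable section

/-- The norm on the free abelian monoid `P →₀ ℕ`, extended multiplicatively
from the norm `N` on the prime elements. -/
def Nm {P : Type*} (N : P → ℕ) (m : P →₀ ℕ) : ℕ :=
  m.prod fun p k => N p ^ k

/-- The number of distinct prime elements generating `m`. -/
def omegaM {P : Type*} (m : P →₀ ℕ) : ℕ := m.support.card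

/-- `m` is `h`-free: every multiplicity is at most `h - 1`. -/
def HFree {P : Type*} (h : ℕ) (m : P →₀ ℕ) : Prop := ∀ p, m p ≤ h - 1

/-- `m` is `h`-full: every nonzero multiplicity is at least `h`. -/
def HFull {P : Type*} (h : ℕ) (m : P →₀ ℕ) : Prop := ∀ p, m p = 0 ∨ h ≤ m p

/-- Condition (★): `#{m : N(m) ≤ x} = κ·x + O(x^θ)` with `κ > 0`, `0 ≤ θ < 1`. -/
def StarCond {P : Type*} (N : P → ℕ) (κ θ : ℝ) : Prop :=
  0 < κ ∧ 0 ≤ θ ∧ θ < 1 ∧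
    (fun x : ℝ => (({m : P →₀ ℕ | (Nm N m : ℝ) ≤ x}.ncard : ℝ) - κ * x))
      =O[atTop] fun x : ℝ => x ^ θ

/-- The generalized zeta function `ζ_M(s) = ∑_m N(m)^{-s}`. -/
def zetaM {P : Type*} (N : P → ℕ) (s : ℝ) : ℝ :=
  ∑' m : P →₀ ℕ, 1 / (Nm N m : ℝ) ^ s

/-- The constant `γ_h`. -/
def gammah {P : Type*} (N : P → ℕ) (h : ℕ) : ℝ :=
  ∏' p : P, (1 + ((N p : ℝ) - (N p : ℝ) ^ (1 / (h : ℝ))) /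
    ((N p : ℝ) ^ 2 * ((N p : ℝ) ^ (1 / (h : ℝ)) - 1)))

/-- `A` is the Mertens constant `𝔄` of the prime system:
`𝔄 = lim (∑_{N(p) ≤ x} 1/N(p) − log log x)`. -/
def IsMertens {P : Type*} (N : P → ℕ) (A : ℝ) : Prop :=
  Tendsto (fun x : ℝ =>
      (∑ᶠ p ∈ {p : P | (N p : ℝ) ≤ x}, 1 / (N p : ℝ)) - Real.log (Real.log x))
    atTop (𝓝 A)

/-- The constant `𝔅 = -π²/6`. -/
def Bconst : ℝ := -(Real.pi ^ 2) / 6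

/-- The constant `ℭ₁`, given the Mertens constant `A`. -/
def C1const {P : Type*} (N : P → ℕ) (h : ℕ) (A : ℝ) : ℝ :=
  A - ∑' p : P, ((N p : ℝ) - 1) / ((N p : ℝ) * ((N p : ℝ) ^ h - 1))

/-- The constant `ℭ₂`, given the Mertens constant `A`. -/
def C2const {P : Type*} (N : P → ℕ) (h : ℕ) (A : ℝ) : ℝ :=
  C1const N h A ^ 2 + C1const N h A + Bconst -
    ∑' p : P, (((N p : ℝ) ^ (h - 1) - 1) / ((N p : ℝ) ^ h - 1)) ^ 2

/-- The convergent series `𝔏_h(r)`. -/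
def LhSum {P : Type*} (N : P → ℕ) (h : ℕ) (r : ℝ) : ℝ :=
  ∑' p : P, 1 / ((N p : ℝ) ^ (r / (h : ℝ) - 1) *
    ((N p : ℝ) - (N p : ℝ) ^ (1 - 1 / (h : ℝ)) + 1))

/-- The constant `𝔇₁`, given the Mertens constant `A`. -/
def D1const {P : Type*} (N : P → ℕ) (h : ℕ) (A : ℝ) : ℝ :=
  A - Real.log (h : ℝ) + LhSum N h ((h : ℝ) + 1) - LhSum N h (2 * (h : ℝ))

/-- The constant `𝔇₂`, given the Mertens constant `A`. -/
def D2const {P : Type*} (N : P → ℕ) (h : ℕ) (A : ℝ) : ℝ :=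
  D1const N h A ^ 2 + D1const N h A + Bconst -
    ∑' p : P, (1 / ((N p : ℝ) - (N p : ℝ) ^ (1 - 1 / (h : ℝ)) + 1)) ^ 2

/-- The error term `R_{S_h}(x)` for `h`-free counts. -/
def RSfree (h : ℕ) (θ : ℝ) (x : ℝ) : ℝ :=
  if 1 / (h : ℝ) < θ then x ^ θ
  else if 1 / (h : ℝ) = θ then x ^ (1 / (h : ℝ)) * Real.log x
  else x ^ (1 / (h : ℝ))

/-- The error term `R_{N_h}(x)` for `h`-full counts. -/
def RNfull (h : ℕ) (θ : ℝ) (x : ℝ) : ℝ :=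
  if (h : ℝ) / ((h : ℝ) + 1) < θ then x ^ (θ / (h : ℝ))
  else if ∃ i : ℕ, 1 ≤ i ∧ i ≤ h - 1 ∧ θ = (h : ℝ) / ((h : ℝ) + (i : ℝ)) then
    x ^ (1 / ((h : ℝ) + 1)) * Real.log x
  else x ^ (1 / ((h : ℝ) + 1))

/-!
Exchanging the order of summation, the sum is `∑_p D_p(x)`, where `D_p(x)` counts the `h`-free
multiples of the prime `p` of norm at most `x`. A sieve over squarefree elements gives
`S_h(x) = (κ / ζ_M(h)) x + O(x ^ τ)` for some `1 / 2 < τ < 1`. Stripping one factor `p` from a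
multiple of `p` gives, with `q = N(p)`, the recursion
`D_p(x) = S_h(x / q) - S_h(x / q ^ h) + D_p(x / q ^ h)`, hence
`D_p(x) = (κ / ζ_M(h)) (1 / q - (q - 1) / (q (q ^ h - 1))) x + O((x / q) ^ τ)` uniformly in `p`.
Summing over `N(p) ≤ x`, the main term is evaluated by Mertens' second theorem with error
`O(1 / log x)`, and the total error is `O(x / log x)` because `ψ(x) = O(x)`. Both follow
from (★) by elementary means: the Chebyshev bound by Möbius inversion of
`∑_m ψ(x / N(m)) = ∑_m log N(m)`, and Mertens' theorems from it by partial summation.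
-/

section CountingNorm

variable {ι ι' : Type*}

/-- A norm with respect to which one can count: positive integer valued, with finitely many
elements below any bound. -/
class CountingNorm (ν : ι → ℕ) : Prop where
  one_le : ∀ i, 1 ≤ ν i
  finite_le : ∀ n, {i | ν i ≤ n}.Finite

lemma CountingNorm.finite_cast_le (ν : ι → ℕ) [CountingNorm ν] (x : ℝ) :
    {i | (ν i : ℝ) ≤ x}.Finite :=
  (CountingNorm.finite_le (ν := ν) ⌊x⌋₊).subset fun _ hi => Nat.le_floor hi

/-- The finite set of elements of norm at most `x`; the bound is real so that it can be divided. -/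
def normLE (ν : ι → ℕ) [CountingNorm ν] (x : ℝ) : Finset ι :=
  (CountingNorm.finite_cast_le ν x).toFinset

variable {ν : ι → ℕ} [CountingNorm ν] {μ : ι' → ℕ} [CountingNorm μ]

@[simp] lemma mem_normLE {x : ℝ} {i : ι} : i ∈ normLE ν x ↔ (ν i : ℝ) ≤ x := by
  simp [normLE]

lemma coe_normLE (x : ℝ) : (normLE ν x : Set ι) = {i | (ν i : ℝ) ≤ x} := by
  ext i
  simp

lemma one_le_cast_norm (i : ι) : (1 : ℝ) ≤ ν i := by
  exact_mod_cast CountingNorm.one_le i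

lemma cast_norm_pos (i : ι) : (0 : ℝ) < ν i :=
  zero_lt_one.trans_le (one_le_cast_norm i)

lemma normLE_mono : Monotone (normLE ν) :=
  fun _ _ hxy _ hi => mem_normLE.2 ((mem_normLE.1 hi).trans hxy)

lemma normLE_eq_empty {x : ℝ} (hx : x < 1) : normLE ν x = ∅ :=
  Finset.eq_empty_of_forall_notMem fun i hi =>
    (hx.trans_le (one_le_cast_norm i)).not_ge (mem_normLE.1 hi)

lemma one_le_div_of_mem_normLE {x : ℝ} {i : ι} (hi : i ∈ normLE ν x) : 1 ≤ x / ν i :=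
  (one_le_div (cast_norm_pos i)).2 (mem_normLE.1 hi)

variable (ν) in
lemma tendsto_normLE_atTop : Tendsto (normLE ν) atTop atTop :=
  tendsto_atTop_finset_of_monotone normLE_mono fun i => ⟨ν i, mem_normLE.2 le_rfl⟩

lemma CountingNorm.of_injective {ξ : ι' → ℕ} {j : ι' → ι} (hj : Function.Injective j)
    (hνj : ∀ i, ν (j i) = ξ i) : CountingNorm ξ where
  one_le i := hνj i ▸ CountingNorm.one_le (j i)
  finite_le n := by
    refine ((CountingNorm.finite_le (ν := ν) n).preimage hj.injOn).subset fun i hi => ?_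
    simpa only [Set.mem_preimage, Set.mem_ofPred_eq, hνj] using hi

lemma card_normLE_le_of_injective {j : ι' → ι} (hj : Function.Injective j)
    (hνj : ∀ i, ν (j i) = μ i) (x : ℝ) : (normLE μ x).card ≤ (normLE ν x).card :=
  Finset.card_le_card_of_injOn j (fun i hi => by simpa [hνj] using hi) hj.injOn

/-- The product of two norms, on pairs. -/
def prodNorm (ν : ι → ℕ) (μ : ι' → ℕ) (q : ι × ι') : ℕ := ν q.1 * μ q.2

instance : CountingNorm (prodNorm ν μ) where
  one_le q := Nat.mul_pos (CountingNorm.one_le q.1) (CountingNorm.one_le q.2)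
  finite_le n := by
    refine ((CountingNorm.finite_le (ν := ν) n).prod (CountingNorm.finite_le (ν := μ) n)).subset
      fun q hq => ⟨?_, ?_⟩
    · exact (Nat.le_mul_of_pos_right _ (CountingNorm.one_le q.2)).trans hq
    · exact (Nat.le_mul_of_pos_left _ (CountingNorm.one_le q.1)).trans hq

lemma sum_normLE_prodNorm (f : ι → ι' → ℝ) (x : ℝ) :
    ∑ q ∈ normLE (prodNorm ν μ) x, f q.1 q.2
      = ∑ i ∈ normLE ν x, ∑ j ∈ normLE μ (x / ν i), f i j := by
  refine Finset.sum_finset_product' _ _ _ fun q => ?_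
  have hle : (ν q.1 : ℝ) ≤ ν q.1 * μ q.2 :=
    le_mul_of_one_le_right (by positivity) (one_le_cast_norm _)
  simp only [mem_normLE, prodNorm, Nat.cast_mul, le_div_iff₀' (cast_norm_pos q.1)]
  exact ⟨fun h => ⟨hle.trans h, h⟩, fun h => h.2⟩

lemma sum_normLE_comm (f : ι → ι' → ℝ) (x : ℝ) :
    ∑ i ∈ normLE ν x, ∑ j ∈ normLE μ (x / ν i), f i j
      = ∑ j ∈ normLE μ x, ∑ i ∈ normLE ν (x / μ j), f i j := by
  rw [← sum_normLE_prodNorm, ← sum_normLE_prodNorm fun j i => f i j]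
  exact Finset.sum_equiv (Equiv.prodComm ι ι') (by simp [prodNorm, mul_comm]) (by simp)

end CountingNorm

section AbelSummation

open MeasureTheory intervalIntegral

variable {ι : Type*} {ν : ι → ℕ} [CountingNorm ν]

lemma sum_fiber_eq_sum_normLE (w : ι → ℝ) {b t : ℝ} (ht : 0 ≤ t) (htb : t ≤ b) :
    ∑ k ∈ Finset.Icc 0 ⌊t⌋₊, ∑ i ∈ normLE ν b with ν i = k, w i = ∑ i ∈ normLE ν t, w i := by
  have hset : normLE ν t = {i ∈ normLE ν b | ν i ∈ Finset.Icc 0 ⌊t⌋₊} := by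
    ext i
    simp only [mem_normLE, Finset.mem_filter, Finset.mem_Icc, zero_le, true_and,
      Nat.le_floor_iff ht]
    exact ⟨fun h => ⟨h.trans htb, h⟩, And.right⟩
  rw [hset, Finset.sum_fiberwise_eq_sum_filter]

lemma sum_fiber_mul_eq_sub (w : ι → ℝ) (f : ℝ → ℝ) {a b : ℝ} (ha : 0 ≤ a) (hab : a ≤ b) :
    ∑ k ∈ Finset.Ioc ⌊a⌋₊ ⌊b⌋₊, f k * ∑ i ∈ normLE ν b with ν i = k, w i
      = ∑ i ∈ normLE ν b, w i * f (ν i) - ∑ i ∈ normLE ν a, w i * f (ν i) := by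
  have hset : normLE ν b \ normLE ν a = {i ∈ normLE ν b | ν i ∈ Finset.Ioc ⌊a⌋₊ ⌊b⌋₊} := by
    ext i
    simp only [mem_normLE, Finset.mem_sdiff, Finset.mem_filter, Finset.mem_Ioc, not_le,
      Nat.le_floor_iff (ha.trans hab), Nat.floor_lt ha]
    tauto
  rw [← Finset.sum_sdiff_eq_sub (normLE_mono hab), hset, ← Finset.sum_fiberwise_eq_sum_filter]
  refine Finset.sum_congr rfl fun k _ => ?_
  rw [Finset.mul_sum]
  refine Finset.sum_congr rfl fun i hi => ?_
  rw [(Finset.mem_filter.1 hi).2, mul_comm]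

lemma intervalIntegrable_mul_sum_normLE (w : ι → ℝ) {g : ℝ → ℝ} {a b : ℝ} (ha : 0 ≤ a)
    (hab : a ≤ b) (hg : ContinuousOn g (Set.Icc a b)) :
    IntervalIntegrable (fun t => g t * ∑ i ∈ normLE ν t, w i) volume a b := by
  rw [intervalIntegrable_iff_integrableOn_Icc_of_le hab]
  refine (integrableOn_mul_sum_Icc (fun k => ∑ i ∈ normLE ν b with ν i = k, w i) (m := 0) ha
    hg.integrableOn_Icc).congr_fun (fun t ht => ?_) measurableSet_Icc
  simp only [sum_fiber_eq_sum_normLE w (ha.trans ht.1) ht.2]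

lemma sum_normLE_mul_sub_eq (w : ι → ℝ) {f f' : ℝ → ℝ} {a b : ℝ} (ha : 0 ≤ a) (hab : a ≤ b)
    (hf : ∀ t ∈ Set.Icc a b, HasDerivAt f (f' t) t) (hf' : ContinuousOn f' (Set.Icc a b)) :
    ∑ i ∈ normLE ν b, w i * f (ν i) - ∑ i ∈ normLE ν a, w i * f (ν i)
      = f b * ∑ i ∈ normLE ν b, w i - f a * ∑ i ∈ normLE ν a, w i
        - ∫ t in a..b, f' t * ∑ i ∈ normLE ν t, w i := by
  have hderiv : Set.EqOn f' (deriv f) (Set.Icc a b) := fun t ht => (hf t ht).deriv.symm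
  have habel := sum_mul_eq_sub_sub_integral_mul (fun k => ∑ i ∈ normLE ν b with ν i = k, w i)
    ha hab (fun t ht => (hf t ht).differentiableAt)
    (hf'.integrableOn_Icc.congr_fun hderiv measurableSet_Icc)
  rw [sum_fiber_eq_sum_normLE w (ha.trans hab) le_rfl, sum_fiber_eq_sum_normLE w ha hab,
    sum_fiber_mul_eq_sub w f ha hab] at habel
  rw [habel, integral_of_le hab]
  congr 1
  refine setIntegral_congr_fun measurableSet_Ioc fun t ht => ?_
  simp only [sum_fiber_eq_sum_normLE w (ha.trans ht.1.le) ht.2,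
    hderiv (Set.Ioc_subset_Icc_self ht)]

lemma abs_sum_normLE_mul_sub_integral_le (w : ι → ℝ) {f f' M M' E : ℝ → ℝ} {a b : ℝ}
    (ha : 0 ≤ a) (hab : a ≤ b)
    (hf : ∀ t ∈ Set.Icc a b, HasDerivAt f (f' t) t) (hf' : ContinuousOn f' (Set.Icc a b))
    (hM : ∀ t ∈ Set.Icc a b, HasDerivAt M (M' t) t) (hM' : ContinuousOn M' (Set.Icc a b))
    (hE : ContinuousOn E (Set.Icc a b))
    (hW : ∀ t ∈ Set.Icc a b, |∑ i ∈ normLE ν t, w i - M t| ≤ E t) :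
    |∑ i ∈ normLE ν b, w i * f (ν i) - ∑ i ∈ normLE ν a, w i * f (ν i) - ∫ t in a..b, f t * M' t|
      ≤ |f b| * E b + |f a| * E a + ∫ t in a..b, |f' t| * E t := by
  have hIcc : Set.uIcc a b = Set.Icc a b := Set.uIcc_of_le hab
  have hMcont : ContinuousOn M (Set.Icc a b) :=
    fun t ht => (hM t ht).continuousAt.continuousWithinAt
  have hparts := integral_mul_deriv_eq_deriv_mul (hIcc ▸ hf) (hIcc ▸ hM)
    (hf'.intervalIntegrable_of_Icc hab) (hM'.intervalIntegrable_of_Icc hab)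
  have hsub := integral_sub (intervalIntegrable_mul_sum_normLE (ν := ν) w ha hab hf')
    ((hf'.fun_mul hMcont).intervalIntegrable_of_Icc hab)
  have hint : |∫ t in a..b, f' t * (∑ i ∈ normLE ν t, w i - M t)|
      ≤ ∫ t in a..b, |f' t| * E t := by
    rw [← Real.norm_eq_abs]
    refine norm_integral_le_of_norm_le hab (Eventually.of_forall fun t ht => ?_)
      ((hf'.abs.fun_mul hE).intervalIntegrable_of_Icc hab)
    rw [norm_mul]
    exact mul_le_mul_of_nonneg_left (hW t (Set.Ioc_subset_Icc_self ht)) (abs_nonneg _)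
  have hsplit : ∑ i ∈ normLE ν b, w i * f (ν i) - ∑ i ∈ normLE ν a, w i * f (ν i)
        - ∫ t in a..b, f t * M' t
      = f b * (∑ i ∈ normLE ν b, w i - M b) - f a * (∑ i ∈ normLE ν a, w i - M a)
        - ∫ t in a..b, f' t * (∑ i ∈ normLE ν t, w i - M t) := by
    simp only [mul_sub] at hsub ⊢
    rw [sum_normLE_mul_sub_eq w ha hab hf hf', hparts, hsub]
    ring
  rw [hsplit]
  refine (abs_sub _ _).trans (add_le_add ((abs_sub _ _).trans (add_le_add ?_ ?_)) hint)
  · rw [abs_mul]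
    exact mul_le_mul_of_nonneg_left (hW b ⟨hab, le_rfl⟩) (abs_nonneg _)
  · rw [abs_mul]
    exact mul_le_mul_of_nonneg_left (hW a ⟨le_rfl, hab⟩) (abs_nonneg _)

end AbelSummation

section LinearGrowth

open MeasureTheory

lemma exists_forall_abs_sub_le_of_tendsto_zero {F r : ℝ → ℝ} {a : ℝ}
    (hF : ∀ y x, a ≤ y → y ≤ x → |F x - F y| ≤ r y) (hr : Tendsto r atTop (𝓝 0)) :
    ∃ c, ∀ y, a ≤ y → |F y - c| ≤ r y := by
  have hcauchy : CauchySeq fun y => F (max a y) := by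
    have hmax : Tendsto (fun y => max a y) atTop atTop :=
      tendsto_atTop_mono (le_max_right a) tendsto_id
    refine cauchySeq_of_le_tendsto_0 (fun y => 2 * r (max a y)) (fun x x' y hx hx' => ?_)
      (by simpa using (hr.comp hmax).const_mul 2)
    have hxy := hF _ _ (le_max_left a y) (max_le_max_left a hx)
    have hx'y := hF _ _ (le_max_left a y) (max_le_max_left a hx')
    rw [Real.dist_eq]
    linarith [abs_sub_le (F (max a x)) (F (max a y)) (F (max a x')),
      abs_sub_comm (F (max a y)) (F (max a x'))]
  obtain ⟨c, hc⟩ := cauchySeq_tendsto_of_complete hcauchy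
  refine ⟨c, fun y hy => ?_⟩
  rw [abs_sub_comm]
  refine le_of_tendsto (hc.sub_const (F y)).abs ((eventually_ge_atTop y).mono fun x hx => ?_)
  exact hF y _ hy (hx.trans (le_max_right a x))

variable {ι ι' : Type*} {ν : ι → ℕ} [CountingNorm ν] {μ : ι' → ℕ} [CountingNorm μ]

/-- Nonnegative weights `w` whose sum over the elements of norm at most `x` is at most `B * x`. -/
structure LinearGrowth (ν : ι → ℕ) [CountingNorm ν] (w : ι → ℝ) (B : ℝ) : Prop where
  nonneg : ∀ i, 0 ≤ w i
  sum_le : ∀ x, 0 < x → ∑ i ∈ normLE ν x, w i ≤ B * x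

namespace LinearGrowth

lemma of_injective {B : ℝ} (hν : LinearGrowth ν 1 B) {j : ι' → ι} (hj : Function.Injective j)
    (hνj : ∀ i, ν (j i) = μ i) : LinearGrowth μ 1 B where
  nonneg _ := zero_le_one
  sum_le x hx := by
    have hcard : ((normLE μ x).card : ℝ) ≤ (normLE ν x).card := by
      exact_mod_cast card_normLE_le_of_injective hj hνj x
    simpa using hcard.trans (by simpa using hν.sum_le x hx)

variable {w : ι → ℝ} {B : ℝ}

lemma bound_nonneg (hw : LinearGrowth ν w B) : 0 ≤ B := by
  simpa using (Finset.sum_nonneg fun i _ => hw.nonneg i).trans (hw.sum_le 1 one_pos)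

lemma sum_mul_rpow_neg_le (hw : LinearGrowth ν w B) {s : ℝ} (hs : 0 ≤ s) (hs1 : s ≠ 1) {x : ℝ}
    (hx : 1 ≤ x) :
    ∑ i ∈ normLE ν x, w i * (ν i : ℝ) ^ (-s) ≤
      B * (x ^ (1 - s) + (1 / 2) ^ (1 - s)
        + s * ((x ^ (1 - s) - (1 / 2) ^ (1 - s)) / (1 - s))) := by
  have hIcc : Set.uIcc (1 / 2) x = Set.Icc (1 / 2) x := Set.uIcc_of_le (by linarith)
  have hpos : ∀ t ∈ Set.Icc (1 / 2) x, 0 < t := fun t ht => lt_of_lt_of_le (by norm_num) ht.1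
  have habel := abs_sum_normLE_mul_sub_integral_le (ν := ν) w (a := 1 / 2) (b := x)
    (f := fun t => t ^ (-s)) (f' := fun t => -s * t ^ (-s - 1)) (M := 0) (M' := 0)
    (E := fun t => B * t) (by norm_num) (by linarith)
    (fun t ht => Real.hasDerivAt_rpow_const (.inl (hpos t ht).ne'))
    (.mul continuousOn_const (continuousOn_id.rpow_const fun t ht => .inl (hpos t ht).ne'))
    (fun t _ => hasDerivAt_const t 0) continuousOn_const (by fun_prop)
    (fun t ht => by
      simpa [abs_of_nonneg (Finset.sum_nonneg fun i _ => hw.nonneg i)] using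
        hw.sum_le t (hpos t ht))
  have hend : ∀ t ∈ Set.Icc (1 / 2) x, |t ^ (-s)| * (B * t) = B * t ^ (1 - s) := fun t ht => by
    rw [abs_of_pos (Real.rpow_pos_of_pos (hpos t ht) _), sub_eq_neg_add,
      Real.rpow_add_one (hpos t ht).ne']
    ring
  have hint : ∫ t in (1 / 2)..x, |-s * t ^ (-s - 1)| * (B * t)
      = B * (s * ((x ^ (1 - s) - (1 / 2) ^ (1 - s)) / (1 - s))) := by
    have hs1' : -s ≠ -1 := fun h => hs1 (neg_injective h)
    have hzero : (0 : ℝ) ∉ Set.uIcc (1 / 2) x := fun h => (hpos 0 (hIcc ▸ h)).false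
    rw [show (1 : ℝ) - s = -s + 1 by ring, ← integral_rpow (.inr ⟨hs1', hzero⟩),
      ← intervalIntegral.integral_const_mul, ← intervalIntegral.integral_const_mul]
    refine intervalIntegral.integral_congr fun t ht => ?_
    have ht0 := hpos t (hIcc ▸ ht)
    rw [abs_mul, abs_neg, abs_of_nonneg hs, abs_of_pos (Real.rpow_pos_of_pos ht0 _),
      Real.rpow_sub_one ht0.ne']
    field_simp
  rw [normLE_eq_empty (by norm_num : (1 / 2 : ℝ) < 1), hint, hend x ⟨by linarith, le_rfl⟩,
    hend (1 / 2) ⟨le_rfl, by linarith⟩] at habel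
  simp only [Finset.sum_empty, sub_zero, Pi.zero_apply, mul_zero,
    intervalIntegral.integral_zero] at habel
  linarith [le_of_abs_le habel]

lemma sum_mul_rpow_div_le (hw : LinearGrowth ν w B) {τ : ℝ} (hτ : 0 ≤ τ) (hτ1 : τ < 1) {x : ℝ}
    (hx : 0 < x) : ∑ i ∈ normLE ν x, w i * (x / ν i) ^ τ ≤ 2 * B / (1 - τ) * x := by
  have hB := hw.bound_nonneg
  have hτ' : 0 < 1 - τ := by linarith
  rcases lt_or_ge x 1 with hx1 | hx1
  · rw [normLE_eq_empty hx1, Finset.sum_empty]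
    positivity
  have hhalf : ((1 / 2 : ℝ)) ^ (1 - τ) ≤ x ^ (1 - τ) :=
    Real.rpow_le_rpow (by norm_num) (by linarith) hτ'.le
  have hhalf0 : (0 : ℝ) ≤ (1 / 2 : ℝ) ^ (1 - τ) := by positivity
  calc ∑ i ∈ normLE ν x, w i * (x / ν i) ^ τ
      = x ^ τ * ∑ i ∈ normLE ν x, w i * (ν i : ℝ) ^ (-τ) := by
        rw [Finset.mul_sum]
        refine Finset.sum_congr rfl fun i _ => ?_
        rw [Real.div_rpow hx.le (Nat.cast_nonneg _), Real.rpow_neg (Nat.cast_nonneg _)]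
        ring
    _ ≤ x ^ τ * (2 * B / (1 - τ) * x ^ (1 - τ)) := by
        gcongr
        refine (hw.sum_mul_rpow_neg_le hτ hτ1.ne hx1).trans ?_
        rw [div_mul_eq_mul_div, le_div_iff₀ hτ']
        field_simp
        nlinarith [mul_nonneg hB hτ, mul_nonneg hB (sub_nonneg.2 hhalf)]
    _ = 2 * B / (1 - τ) * x := by
        rw [mul_left_comm, ← Real.rpow_add hx, add_sub_cancel, Real.rpow_one]

lemma summable_rpow_neg (hν : LinearGrowth ν 1 B) {s : ℝ} (hs : 1 < s) :
    Summable fun i => (ν i : ℝ) ^ (-s) := by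
  have hB := hν.bound_nonneg
  refine summable_of_sum_le (c := B * (1 + (1 / 2) ^ (1 - s) + s * ((1 / 2) ^ (1 - s) / (s - 1))))
    (fun i => by positivity) fun u => ?_
  obtain ⟨x, hux, hx⟩ := (((tendsto_normLE_atTop ν).eventually_ge_atTop u).and
    (eventually_ge_atTop 1)).exists
  calc ∑ i ∈ u, (ν i : ℝ) ^ (-s) ≤ ∑ i ∈ normLE ν x, (ν i : ℝ) ^ (-s) :=
        Finset.sum_le_sum_of_subset_of_nonneg hux fun i _ _ => by positivity
    _ ≤ B * (x ^ (1 - s) + (1 / 2) ^ (1 - s)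
          + s * ((x ^ (1 - s) - (1 / 2) ^ (1 - s)) / (1 - s))) := by
        simpa using hν.sum_mul_rpow_neg_le (by linarith) hs.ne' hx
    _ ≤ _ := by
        rw [← neg_div_neg_eq (x ^ (1 - s) - _), neg_sub, neg_sub]
        have hx1 : x ^ (1 - s) ≤ 1 := Real.rpow_le_one_of_one_le_of_nonpos hx (by linarith)
        have hx0 : 0 ≤ x ^ (1 - s) := by positivity
        gcongr
        linarith

end LinearGrowth

end LinearGrowth

section FreeMonoid

variable {P : Type*} {N : P → ℕ}

@[simp] lemma Nm_zero (N : P → ℕ) : Nm N 0 = 1 := Finsupp.prod_zero_index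

@[simp] lemma Nm_add (N : P → ℕ) (m n : P →₀ ℕ) : Nm N (m + n) = Nm N m * Nm N n :=
  Finsupp.prod_add_index' (fun _ => pow_zero _) fun _ _ _ => pow_add _ _ _

@[simp] lemma Nm_single (N : P → ℕ) (p : P) (k : ℕ) : Nm N (Finsupp.single p k) = N p ^ k :=
  Finsupp.prod_single_index (pow_zero _)

lemma Nm_nsmul (N : P → ℕ) (k : ℕ) (m : P →₀ ℕ) : Nm N (k • m) = Nm N m ^ k := by
  induction k with
  | zero => simp
  | succ k ih => rw [succ_nsmul, Nm_add, ih, pow_succ]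

/-- The prime norms of an arithmetical semigroup: `N` is at least `2` on primes, and the free
abelian monoid `P →₀ ℕ` has finitely many elements below any norm bound. -/
class ArithmeticNorm (N : P → ℕ) : Prop where
  two_le : ∀ p, 2 ≤ N p
  finite_Nm_le : ∀ n, {m | Nm N m ≤ n}.Finite

/-- The product of the primes in the finite set `A`. -/
def primesProd (A : Finset P) : P →₀ ℕ := Finsupp.indicator A fun _ _ => 1

lemma primesProd_apply (A : Finset P) (p : P) : primesProd A p = if p ∈ A then 1 else 0 := by
  simp [primesProd, Finsupp.indicator_apply]

lemma primesProd_injective : Function.Injective (primesProd (P := P)) := fun A A' hA => by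
  ext p
  have hp := DFunLike.congr_fun hA p
  rw [primesProd_apply, primesProd_apply] at hp
  split_ifs at hp <;> simp_all

lemma nsmul_primesProd_le_iff {h : ℕ} (hh : 1 ≤ h) (A : Finset P) (n : P →₀ ℕ) :
    h • primesProd A ≤ n ↔ A ⊆ {p ∈ n.support | h ≤ n p} := by
  refine forall_congr' fun p => ?_
  by_cases hp : p ∈ A <;> simp [primesProd_apply, hp]
  omega

/-- The norm of the product of the primes in a finite set. -/
def setNorm (N : P → ℕ) (A : Finset P) : ℕ := Nm N (primesProd A)

/-- The norm `N p ^ (k + 1)` of a prime power; indexing by `k` makes `(p, k)` range over all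
nontrivial prime powers. -/
def primePowNorm (N : P → ℕ) (q : P × ℕ) : ℕ := N q.1 ^ (q.2 + 1)

/-- The norm of `p ^ (k + 2)`, so that `(p, k)` ranges over all proper prime powers. -/
def properPowNorm (N : P → ℕ) (q : P × ℕ) : ℕ := N q.1 ^ (q.2 + 2)

lemma single_succ_injective (c : ℕ) :
    Function.Injective fun q : P × ℕ => Finsupp.single q.1 (q.2 + (c + 1)) := fun q q' hq => by
  rcases (Finsupp.single_eq_single_iff _ _ _ _).1 hq with ⟨h1, h2⟩ | ⟨h1, -⟩
  · exact Prod.ext h1 (by omega)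
  · omega

variable [ArithmeticNorm N]

instance : CountingNorm (Nm N) where
  one_le _ := Finset.prod_pos fun p _ =>
    pow_pos (zero_lt_two.trans_le (ArithmeticNorm.two_le p)) _
  finite_le := ArithmeticNorm.finite_Nm_le

instance : CountingNorm N :=
  .of_injective (ν := Nm N) (Finsupp.single_left_injective one_ne_zero) fun p => by simp

instance : CountingNorm (setNorm N) :=
  .of_injective (ν := Nm N) primesProd_injective fun _ => rfl

instance : CountingNorm (primePowNorm N) :=
  .of_injective (ν := Nm N) (single_succ_injective 0) fun _ => Nm_single N _ _

instance : CountingNorm (properPowNorm N) :=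
  .of_injective (ν := Nm N) (single_succ_injective 1) fun _ => Nm_single N _ _

lemma Nm_mono : Monotone (Nm N) := fun m n hmn => by
  rw [← tsub_add_cancel_of_le hmn, Nm_add]
  exact Nat.le_mul_of_pos_left _ (CountingNorm.one_le _)

lemma sum_normLE_div_add (f : (P →₀ ℕ) → ℝ) (a : P →₀ ℕ) (x : ℝ) :
    ∑ m ∈ normLE (Nm N) (x / Nm N a), f (m + a) = ∑ n ∈ normLE (Nm N) x with a ≤ n, f n := by
  refine Finset.sum_nbij' (· + a) (· - a) (fun m hm => ?_) (fun n hn => ?_)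
    (fun m _ => add_tsub_cancel_right m a)
    (fun n hn => tsub_add_cancel_of_le (Finset.mem_filter.1 hn).2) fun _ _ => rfl
  · simpa [le_div_iff₀ (cast_norm_pos (ν := Nm N) a)] using hm
  · obtain ⟨hnx, han⟩ := Finset.mem_filter.1 hn
    rw [mem_normLE, le_div_iff₀ (cast_norm_pos a)]
    rw [← tsub_add_cancel_of_le han] at hnx
    simpa using hnx

lemma hFree_iff_filter_eq_empty {h : ℕ} (hh : 1 ≤ h) (n : P →₀ ℕ) :
    HFree h n ↔ {p ∈ n.support | h ≤ n p} = ∅ := by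
  simp only [HFree, Finset.filter_eq_empty_iff, Finsupp.mem_support_iff]
  exact forall_congr' fun p => by omega

lemma sum_neg_one_pow_card_eq_ite_hFree {h : ℕ} (hh : 1 ≤ h) {x : ℝ} {n : P →₀ ℕ}
    (hn : n ∈ normLE (Nm N) x) :
    ∑ A ∈ normLE (setNorm N) x with h • primesProd A ≤ n, (-1 : ℝ) ^ A.card
      = if HFree h n then 1 else 0 := by
  have hset : {A ∈ normLE (setNorm N) x | h • primesProd A ≤ n}
      = {p ∈ n.support | h ≤ n p}.powerset := by
    ext A
    rw [Finset.mem_filter, Finset.mem_powerset, ← nsmul_primesProd_le_iff hh, mem_normLE]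
    refine and_iff_right_of_imp fun hA => le_trans ?_ (mem_normLE.1 hn)
    have hle : primesProd A ≤ h • primesProd A := by
      simpa using nsmul_le_nsmul_left (a := primesProd A) zero_le hh
    exact_mod_cast Nm_mono (N := N) (hle.trans hA)
  rw [hset, hFree_iff_filter_eq_empty hh]
  exact_mod_cast Finset.sum_powerset_neg_one_pow_card

theorem sum_neg_one_pow_card_mul_sum_eq_sum_hFree {h : ℕ} (hh : 1 ≤ h) (f : (P →₀ ℕ) → ℝ)
    (x : ℝ) :
    ∑ A ∈ normLE (setNorm N) x, (-1 : ℝ) ^ A.card *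
        ∑ m ∈ normLE (Nm N) (x / (setNorm N A : ℝ) ^ h), f (m + h • primesProd A)
      = ∑ n ∈ normLE (Nm N) x with HFree h n, f n := by
  have hshift : ∀ A : Finset P,
      ∑ m ∈ normLE (Nm N) (x / (setNorm N A : ℝ) ^ h), f (m + h • primesProd A)
        = ∑ n ∈ normLE (Nm N) x with h • primesProd A ≤ n, f n := fun A => by
    rw [← sum_normLE_div_add, Nm_nsmul, setNorm, Nat.cast_pow]
  simp only [hshift, Finset.mul_sum, Finset.sum_filter]
  rw [Finset.sum_comm]
  refine Finset.sum_congr rfl fun n hn => ?_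
  rw [← mul_boole (HFree h n), ← sum_neg_one_pow_card_eq_ite_hFree hh hn, Finset.sum_filter,
    Finset.mul_sum]
  refine Finset.sum_congr rfl fun A _ => ?_
  split_ifs <;> ring

theorem sum_neg_one_pow_card_mul_sum_div (g : ℝ → ℝ) {x : ℝ} (hx : 1 ≤ x) :
    ∑ A ∈ normLE (setNorm N) x, (-1 : ℝ) ^ A.card *
        ∑ m ∈ normLE (Nm N) (x / setNorm N A), g (x / setNorm N A / Nm N m) = g x := by
  have hone : {n ∈ normLE (Nm N) x | HFree 1 n} = {0} := by
    ext n
    simp only [Finset.mem_filter, Finset.mem_singleton, mem_normLE, HFree, Nat.sub_self,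
      Nat.le_zero, Finsupp.ext_iff, Finsupp.coe_zero, Pi.zero_apply]
    refine and_iff_right_of_imp fun hn => ?_
    obtain rfl : n = 0 := Finsupp.ext hn
    simpa using hx
  have hsieve := sum_neg_one_pow_card_mul_sum_eq_sum_hFree (N := N) le_rfl
    (fun n => g (x / Nm N n)) x
  rw [hone, Finset.sum_singleton, Nm_zero, Nat.cast_one, div_one] at hsieve
  rw [← hsieve]
  refine Finset.sum_congr rfl fun A _ => ?_
  simp only [pow_one, one_smul, Nm_add, Nat.cast_mul, div_mul_eq_div_div_swap, setNorm]

end FreeMonoid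

section Zeta

variable {P : Type*} {N : P → ℕ} {s : ℝ}

lemma zetaM_eq_tsum_rpow_neg (N : P → ℕ) (s : ℝ) :
    zetaM N s = ∑' m : P →₀ ℕ, (Nm N m : ℝ) ^ (-s) :=
  tsum_congr fun m => by rw [Real.rpow_neg (Nat.cast_nonneg _), one_div]

lemma zetaM_pos (hs : Summable fun m : P →₀ ℕ => (Nm N m : ℝ) ^ (-s)) : 0 < zetaM N s := by
  rw [zetaM_eq_tsum_rpow_neg]
  exact hs.tsum_pos (fun m => by positivity) 0 (by simp)

variable [ArithmeticNorm N]

lemma sum_normLE_prodNorm_rpow_neg_eq_one (s : ℝ) {x : ℝ} (hx : 1 ≤ x) :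
    ∑ q ∈ normLE (prodNorm (setNorm N) (Nm N)) x,
      (-1 : ℝ) ^ q.1.card * (setNorm N q.1 : ℝ) ^ (-s) * (Nm N q.2 : ℝ) ^ (-s) = 1 := by
  have hx0 : 0 < x := by linarith
  have hinv := sum_neg_one_pow_card_mul_sum_div (N := N) (fun y => y ^ s) hx
  rw [sum_normLE_prodNorm fun A m =>
    (-1 : ℝ) ^ A.card * (setNorm N A : ℝ) ^ (-s) * (Nm N m : ℝ) ^ (-s)]
  refine mul_right_cancel₀ (Real.rpow_pos_of_pos hx0 s).ne' ?_
  rw [one_mul, Finset.sum_mul]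
  refine Eq.trans (Finset.sum_congr rfl fun A _ => ?_) hinv
  rw [Finset.sum_mul, Finset.mul_sum]
  refine Finset.sum_congr rfl fun m _ => ?_
  rw [Real.div_rpow (by positivity) (by positivity), Real.div_rpow hx0.le (by positivity),
    Real.rpow_neg (by positivity), Real.rpow_neg (by positivity)]
  ring

lemma hasSum_neg_one_pow_card_mul_setNorm_rpow_neg
    (hs : Summable fun m : P →₀ ℕ => (Nm N m : ℝ) ^ (-s)) :
    HasSum (fun A => (-1 : ℝ) ^ A.card * (setNorm N A : ℝ) ^ (-s)) (zetaM N s)⁻¹ := by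
  have hsA : Summable fun A => (-1 : ℝ) ^ A.card * (setNorm N A : ℝ) ^ (-s) := by
    refine .of_norm ?_
    simpa only [norm_mul, norm_pow, norm_neg, norm_one, one_pow, one_mul, setNorm,
      Function.comp_def] using (hs.comp_injective primesProd_injective).norm
  have hprod := summable_mul_of_summable_norm hsA.norm hs.norm
  have hone : ∑' q : Finset P × (P →₀ ℕ), (-1 : ℝ) ^ q.1.card * (setNorm N q.1 : ℝ) ^ (-s)
      * (Nm N q.2 : ℝ) ^ (-s) = 1 :=
    tendsto_nhds_unique (hprod.hasSum.comp (tendsto_normLE_atTop (prodNorm (setNorm N) (Nm N))))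
      (tendsto_const_nhds.congr' ((eventually_ge_atTop 1).mono fun x hx =>
        (sum_normLE_prodNorm_rpow_neg_eq_one s hx).symm))
  rw [← hsA.tsum_mul_tsum hs hprod, ← zetaM_eq_tsum_rpow_neg] at hone
  rw [← eq_inv_of_mul_eq_one_left hone]
  exact hsA.hasSum

end Zeta

section EffectiveStar

variable {P : Type*} {N : P → ℕ}

/-- Condition (★) in explicit form: the error is bounded for every `y > 0`, and the exponent is
enlarged to exceed `1 / 2`. -/
structure EffectiveStar (N : P → ℕ) [ArithmeticNorm N] (κ τ C : ℝ) : Prop where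
  density_pos : 0 < κ
  half_lt : 1 / 2 < τ
  lt_one : τ < 1
  abs_card_sub_le : ∀ y, 0 < y → |((normLE (Nm N) y).card - κ * y : ℝ)| ≤ C * y ^ τ

lemma StarCond.finite_Nm_le {κ θ : ℝ} (hstar : StarCond N κ θ) (n : ℕ) :
    {m | Nm N m ≤ n}.Finite := by
  by_contra hinf
  obtain ⟨hκ, -, hθ1, hO⟩ := hstar
  have hlinear : (fun x : ℝ => x) =O[atTop] fun x : ℝ => x ^ θ := by
    refine (isBigO_const_mul_left_iff (neg_ne_zero.2 hκ.ne')).1 (hO.congr' ?_ .rfl)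
    filter_upwards [eventually_ge_atTop (n : ℝ)] with x hx
    have hinfx : {m | (Nm N m : ℝ) ≤ x}.Infinite :=
      Set.Infinite.mono (fun m hm => (Nat.cast_le.2 hm).trans hx) hinf
    rw [hinfx.ncard, Nat.cast_zero, zero_sub, neg_mul]
  have hlittle : (fun x : ℝ => x ^ θ) =o[atTop] fun x : ℝ => x := by
    refine isLittleO_of_tendsto' ((eventually_ne_atTop 0).mono fun x hx h0 => absurd h0 hx) ?_
    refine (tendsto_rpow_neg_atTop (sub_pos.2 hθ1)).congr'
      ((eventually_ne_atTop 0).mono fun x hx => ?_)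
    rw [neg_sub, Real.rpow_sub_one hx]
  exact isLittleO_irrefl (eventually_ne_atTop (0 : ℝ)).frequently
    (hlinear.trans_isLittleO hlittle)

lemma StarCond.arithmeticNorm {κ θ : ℝ} (hstar : StarCond N κ θ) (hN : ∀ p, 2 ≤ N p) :
    ArithmeticNorm N where
  two_le := hN
  finite_Nm_le := hstar.finite_Nm_le

lemma ncard_setOf_Nm_le [ArithmeticNorm N] (x : ℝ) :
    {m : P →₀ ℕ | (Nm N m : ℝ) ≤ x}.ncard = (normLE (Nm N) x).card := by
  rw [← coe_normLE, Set.ncard_coe_finset]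

lemma StarCond.exists_effectiveStar [ArithmeticNorm N] {κ θ τ : ℝ} (hstar : StarCond N κ θ)
    (hθτ : θ ≤ τ) (hτ : 1 / 2 < τ) (hτ1 : τ < 1) : ∃ C, EffectiveStar N κ τ C := by
  obtain ⟨hκ, -, -, hO⟩ := hstar
  obtain ⟨C₀, hC₀, hbound⟩ := hO.exists_nonneg
  obtain ⟨x₀, hx₀⟩ := eventually_atTop.1 hbound.bound
  set x₁ := max x₀ 1
  have hx₁ : 1 ≤ x₁ := le_max_right _ _
  refine ⟨C₀ + ((normLE (Nm N) x₁).card + κ * x₁), hκ, hτ, hτ1, fun y hy => ?_⟩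
  rw [add_mul]
  have hC₀y : 0 ≤ C₀ * y ^ τ := by positivity
  have hκx₁ : κ ≤ κ * x₁ := le_mul_of_one_le_right hκ.le hx₁
  rcases lt_or_ge y 1 with hy1 | hy1
  · have hyτ : y ≤ y ^ τ := by
      simpa using Real.rpow_le_rpow_of_exponent_ge hy hy1.le hτ1.le
    rw [normLE_eq_empty hy1, Finset.card_empty, Nat.cast_zero, zero_sub, abs_neg,
      abs_of_pos (mul_pos hκ hy)]
    refine le_add_of_nonneg_of_le hC₀y (mul_le_mul ?_ hyτ hy.le (by positivity))
    exact le_add_of_nonneg_of_le (Nat.cast_nonneg _) hκx₁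
  have hone : 1 ≤ y ^ τ := Real.one_le_rpow hy1 (by linarith)
  rcases le_total x₁ y with hxy | hyx
  · have hlarge := hx₀ y ((le_max_left _ _).trans hxy)
    rw [ncard_setOf_Nm_le, Real.norm_eq_abs, Real.norm_of_nonneg (by positivity)] at hlarge
    refine le_add_of_le_of_nonneg (hlarge.trans ?_) (by positivity)
    exact mul_le_mul_of_nonneg_left (Real.rpow_le_rpow_of_exponent_le hy1 hθτ) hC₀
  · have hcard : ((normLE (Nm N) y).card : ℝ) ≤ (normLE (Nm N) x₁).card := by
      exact_mod_cast Finset.card_le_card (normLE_mono hyx)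
    have hκy : κ * y ≤ κ * x₁ := mul_le_mul_of_nonneg_left hyx hκ.le
    have hsmall : |((normLE (Nm N) y).card - κ * y : ℝ)| ≤ (normLE (Nm N) x₁).card + κ * x₁ := by
      refine (abs_sub _ _).trans (add_le_add ?_ ?_)
      · rwa [Nat.abs_cast]
      · rwa [abs_of_pos (mul_pos hκ hy)]
    exact le_add_of_nonneg_of_le hC₀y
      (hsmall.trans (le_mul_of_one_le_right (by positivity) hone))

lemma integral_abs_neg_inv_sq_mul_rpow {C τ y x : ℝ} (hτ : τ < 1) (hy : 0 < y) (hyx : y ≤ x) :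
    ∫ t in y..x, |-(t ^ 2)⁻¹| * (C * t ^ τ) = C / (1 - τ) * (y ^ (τ - 1) - x ^ (τ - 1)) := by
  have hpos : ∀ t ∈ Set.uIcc y x, 0 < t := fun t ht => hy.trans_le (Set.uIcc_of_le hyx ▸ ht).1
  have hpow := integral_rpow (r := τ - 2) (.inr ⟨by linarith, fun h => (hpos 0 h).false⟩)
  rw [show τ - 2 + 1 = -(1 - τ) by ring, div_neg, ← neg_div, neg_sub, neg_sub] at hpow
  rw [div_mul_eq_mul_div, mul_div_assoc, ← hpow, ← intervalIntegral.integral_const_mul]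
  refine intervalIntegral.integral_congr fun t ht => ?_
  have ht0 := hpos t ht
  rw [abs_neg, abs_of_pos (by positivity), Real.rpow_sub ht0, Real.rpow_two]
  ring

namespace EffectiveStar

variable [ArithmeticNorm N] {κ τ C : ℝ}

lemma error_nonneg (hE : EffectiveStar N κ τ C) : 0 ≤ C := by
  simpa using (abs_nonneg _).trans (hE.abs_card_sub_le 1 one_pos)

lemma exponent_pos (hE : EffectiveStar N κ τ C) : 0 < τ := by
  linarith [hE.half_lt]

lemma linearGrowth_Nm (hE : EffectiveStar N κ τ C) : LinearGrowth (Nm N) 1 (κ + C) where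
  nonneg _ := zero_le_one
  sum_le x hx := by
    have hκ := hE.density_pos
    have hC := hE.error_nonneg
    rcases lt_or_ge x 1 with hx1 | hx1
    · rw [normLE_eq_empty hx1, Finset.sum_empty]
      positivity
    have hxτ : x ^ τ ≤ x := by
      simpa using Real.rpow_le_rpow_of_exponent_le hx1 hE.lt_one.le
    have hCx : C * x ^ τ ≤ C * x := mul_le_mul_of_nonneg_left hxτ hC
    simp only [Pi.one_apply, Finset.sum_const, nsmul_eq_mul, mul_one]
    linarith [le_of_abs_le (hE.abs_card_sub_le x hx)]

lemma linearGrowth_setNorm (hE : EffectiveStar N κ τ C) :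
    LinearGrowth (setNorm N) 1 (κ + C) :=
  hE.linearGrowth_Nm.of_injective primesProd_injective fun _ => rfl

lemma linearGrowth_prime (hE : EffectiveStar N κ τ C) : LinearGrowth N 1 (κ + C) :=
  hE.linearGrowth_Nm.of_injective (Finsupp.single_left_injective one_ne_zero) fun p => by simp

end EffectiveStar

end EffectiveStar

section NormSums

variable {P : Type*} {N : P → ℕ} [ArithmeticNorm N] {κ τ C : ℝ}

namespace EffectiveStar

lemma abs_sum_one_sub_le (hE : EffectiveStar N κ τ C) {y : ℝ} (hy : 0 < y) :
    |∑ _m ∈ normLE (Nm N) y, (1 : ℝ) - κ * y| ≤ C * y ^ τ := by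
  simpa using hE.abs_card_sub_le y hy

lemma abs_sum_log_sub_le (hE : EffectiveStar N κ τ C) {x : ℝ} (hx : 1 ≤ x) :
    |∑ m ∈ normLE (Nm N) x, Real.log (Nm N m) - κ * (x * Real.log x - x + 1)|
      ≤ Real.log x * (C * x ^ τ) + C * ((x ^ τ - 1) / τ) := by
  have hpos : ∀ t ∈ Set.Icc 1 x, 0 < t := fun t ht => zero_lt_one.trans_le ht.1
  have habel := abs_sum_normLE_mul_sub_integral_le (ν := Nm N) (fun _ => 1) (a := 1) (b := x)
    (f := Real.log) (f' := fun t => t⁻¹) (M := fun t => κ * t) (M' := fun _ => κ)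
    (E := fun t => C * t ^ τ) zero_le_one hx
    (fun t ht => Real.hasDerivAt_log (hpos t ht).ne')
    (continuousOn_id.inv₀ fun t ht => (hpos t ht).ne')
    (fun t _ => by simpa using (hasDerivAt_id t).const_mul κ) continuousOn_const
    (continuousOn_const.mul (continuousOn_id.rpow_const fun t ht => .inl (hpos t ht).ne'))
    (fun t ht => hE.abs_sum_one_sub_le (hpos t ht))
  have hunit : ∑ m ∈ normLE (Nm N) 1, 1 * Real.log (Nm N m) = 0 :=
    Finset.sum_eq_zero fun m hm => by
      rw [le_antisymm (mem_normLE.1 hm) (one_le_cast_norm m), Real.log_one, mul_zero]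
  have hmain : ∫ t in (1 : ℝ)..x, Real.log t * κ = κ * (x * Real.log x - x + 1) := by
    rw [intervalIntegral.integral_mul_const, integral_log, Real.log_one]
    ring
  have herr : ∫ t in (1 : ℝ)..x, |t⁻¹| * (C * t ^ τ) = C * ((x ^ τ - 1) / τ) := by
    rw [← Real.one_rpow τ, ← sub_add_cancel τ 1,
      ← integral_rpow (.inl (by linarith [hE.exponent_pos])), sub_add_cancel, Real.one_rpow,
      ← intervalIntegral.integral_const_mul]
    refine intervalIntegral.integral_congr fun t ht => ?_
    have ht0 := hpos t (Set.uIcc_of_le hx ▸ ht)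
    rw [abs_of_pos (inv_pos.2 ht0), Real.rpow_sub_one ht0.ne']
    ring
  rw [hunit, hmain, herr, Real.log_one, abs_zero, zero_mul, sub_zero, add_zero,
    abs_of_nonneg (Real.log_nonneg hx)] at habel
  simpa only [one_mul] using habel

theorem exists_abs_sum_log_sub_le (hE : EffectiveStar N κ τ C) {σ : ℝ} (hσ : τ < σ) :
    ∃ K, ∀ x, 1 ≤ x →
      |∑ m ∈ normLE (Nm N) x, Real.log (Nm N m) - (κ * x * Real.log x - κ * x)| ≤ K * x ^ σ := by
  refine ⟨C / (σ - τ) + C / τ + κ, fun x hx => ?_⟩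
  have hx0 : 0 < x := by linarith
  have hτ := hE.exponent_pos
  have hC := hE.error_nonneg
  have hκ := hE.density_pos
  have hone : 1 ≤ x ^ σ := Real.one_le_rpow hx (hτ.trans hσ).le
  have hlog : Real.log x * (C * x ^ τ) ≤ C / (σ - τ) * x ^ σ := by
    calc Real.log x * (C * x ^ τ) ≤ x ^ (σ - τ) / (σ - τ) * (C * x ^ τ) := by
          gcongr
          exact Real.log_le_rpow_div hx0.le (sub_pos.2 hσ)
      _ = C / (σ - τ) * x ^ σ := by
          rw [Real.rpow_sub hx0]
          field_simp
  have hpow : C * ((x ^ τ - 1) / τ) ≤ C / τ * x ^ σ := by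
    rw [mul_div_assoc', div_mul_eq_mul_div]
    gcongr
    linarith [Real.rpow_le_rpow_of_exponent_le hx hσ.le]
  have habel := abs_le.1 (hE.abs_sum_log_sub_le hx)
  have hκx : κ ≤ κ * x ^ σ := le_mul_of_one_le_right hκ.le hone
  rw [abs_le]
  constructor <;> linarith

lemma abs_sum_inv_sub_sub_le (hE : EffectiveStar N κ τ C) {y x : ℝ} (hy : 1 ≤ y) (hyx : y ≤ x) :
    |(∑ m ∈ normLE (Nm N) x, (Nm N m : ℝ)⁻¹ - κ * Real.log x)
        - (∑ m ∈ normLE (Nm N) y, (Nm N m : ℝ)⁻¹ - κ * Real.log y)|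
      ≤ (2 * C + C / (1 - τ)) * y ^ (τ - 1) := by
  have hy0 : 0 < y := by linarith
  have hx0 : 0 < x := hy0.trans_le hyx
  have hC := hE.error_nonneg
  have hτ1 : 0 < 1 - τ := sub_pos.2 hE.lt_one
  have hpos : ∀ t ∈ Set.Icc y x, 0 < t := fun t ht => hy0.trans_le ht.1
  have habel := abs_sum_normLE_mul_sub_integral_le (ν := Nm N) (fun _ => 1) (a := y) (b := x)
    (f := fun t => t⁻¹) (f' := fun t => -(t ^ 2)⁻¹) (M := fun t => κ * t) (M' := fun _ => κ)
    (E := fun t => C * t ^ τ) hy0.le hyx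
    (fun t ht => hasDerivAt_inv (hpos t ht).ne')
    ((continuousOn_id.pow 2).inv₀ fun t ht => (pow_pos (hpos t ht) 2).ne').neg
    (fun t _ => by simpa using (hasDerivAt_id t).const_mul κ) continuousOn_const
    (continuousOn_const.mul (continuousOn_id.rpow_const fun t ht => .inl (hpos t ht).ne'))
    (fun t ht => hE.abs_sum_one_sub_le (hpos t ht))
  have hmain : ∫ t in y..x, t⁻¹ * κ = κ * Real.log x - κ * Real.log y := by
    rw [intervalIntegral.integral_mul_const, integral_inv_of_pos hy0 hx0,
      Real.log_div hx0.ne' hy0.ne']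
    ring
  have hend : ∀ t, 0 < t → |t⁻¹| * (C * t ^ τ) = C * t ^ (τ - 1) := fun t ht => by
    rw [abs_of_pos (inv_pos.2 ht), Real.rpow_sub_one ht.ne']
    ring
  have hle : x ^ (τ - 1) ≤ y ^ (τ - 1) := Real.rpow_le_rpow_of_nonpos hy0 hyx (by linarith)
  have hCle : C * x ^ (τ - 1) ≤ C * y ^ (τ - 1) := mul_le_mul_of_nonneg_left hle hC
  have hquot : 0 ≤ C / (1 - τ) * x ^ (τ - 1) := by positivity
  rw [hmain, integral_abs_neg_inv_sq_mul_rpow hE.lt_one hy0 hyx, hend x hx0, hend y hy0] at habel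
  simp only [one_mul] at habel
  rw [sub_sub_sub_comm]
  linarith

theorem exists_abs_sum_div_sub_le (hE : EffectiveStar N κ τ C) :
    ∃ c K, ∀ x, 1 ≤ x →
      |∑ m ∈ normLE (Nm N) x, x / Nm N m - (κ * x * Real.log x + c * x)| ≤ K * x ^ τ := by
  have hlim : Tendsto (fun y : ℝ => (2 * C + C / (1 - τ)) * y ^ (τ - 1)) atTop (𝓝 0) := by
    simpa using (tendsto_rpow_neg_atTop (sub_pos.2 hE.lt_one)).const_mul (2 * C + C / (1 - τ))
  obtain ⟨c, hc⟩ := exists_forall_abs_sub_le_of_tendsto_zero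
    (fun y x => hE.abs_sum_inv_sub_sub_le) hlim
  refine ⟨c, 2 * C + C / (1 - τ), fun x hx => ?_⟩
  have hx0 : 0 < x := by linarith
  calc |∑ m ∈ normLE (Nm N) x, x / Nm N m - (κ * x * Real.log x + c * x)|
      = x * |∑ m ∈ normLE (Nm N) x, (Nm N m : ℝ)⁻¹ - κ * Real.log x - c| := by
        rw [← abs_of_pos hx0, ← abs_mul, abs_of_pos hx0]
        simp only [div_eq_mul_inv, ← Finset.mul_sum]
        ring_nf
    _ ≤ x * ((2 * C + C / (1 - τ)) * x ^ (τ - 1)) := by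
        gcongr
        exact hc x hx
    _ = (2 * C + C / (1 - τ)) * x ^ τ := by
        rw [Real.rpow_sub_one hx0.ne']
        field_simp

end EffectiveStar

end NormSums

section Chebyshev

variable {P : Type*} {N : P → ℕ} [ArithmeticNorm N] {κ τ C : ℝ}

/-- The Chebyshev function `ψ`: each prime power `p ^ (k + 1)` of norm at most `x` contributes
`log (N p)`. -/
def chebyshevPsi (N : P → ℕ) [ArithmeticNorm N] (x : ℝ) : ℝ :=
  ∑ q ∈ normLE (primePowNorm N) x, Real.log (N q.1)

lemma log_Nm (m : P →₀ ℕ) :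
    Real.log (Nm N m) = ∑ p ∈ m.support, (m p : ℝ) * Real.log (N p) := by
  rw [Nm, Finsupp.prod, Nat.cast_prod,
    Real.log_prod fun p _ => (Nat.cast_pos.2 (pow_pos (CountingNorm.one_le p) _)).ne']
  simp

lemma sum_log_primePow_eq_log_Nm {x : ℝ} {n : P →₀ ℕ} (hn : n ∈ normLE (Nm N) x) :
    ∑ q ∈ normLE (primePowNorm N) x with Finsupp.single q.1 (q.2 + 1) ≤ n, Real.log (N q.1)
      = Real.log (Nm N n) := by
  rw [log_Nm, Finset.sum_finset_product _ n.support fun p => Finset.range (n p)]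
  · simp
  rintro ⟨p, k⟩
  simp only [Finset.mem_filter, mem_normLE, Finsupp.single_le_iff, Finsupp.mem_support_iff,
    Finset.mem_range]
  refine ⟨fun hk => by omega, fun hk => ⟨le_trans ?_ (mem_normLE.1 hn), hk.2⟩⟩
  have hle : Finsupp.single p (k + 1) ≤ n := Finsupp.single_le_iff.2 hk.2
  rw [primePowNorm, ← Nm_single N p (k + 1)]
  exact_mod_cast Nm_mono hle

lemma sum_log_Nm_eq_sum_log_mul_card (x : ℝ) :
    ∑ m ∈ normLE (Nm N) x, Real.log (Nm N m)
      = ∑ q ∈ normLE (primePowNorm N) x,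
          Real.log (N q.1) * (normLE (Nm N) (x / primePowNorm N q)).card := by
  have hcard : ∀ q : P × ℕ, ((normLE (Nm N) (x / primePowNorm N q)).card : ℝ)
      = ∑ n ∈ normLE (Nm N) x with Finsupp.single q.1 (q.2 + 1) ≤ n, 1 := fun q => by
    rw [← sum_normLE_div_add (fun _ => 1), Nm_single, primePowNorm]
    simp
  simp only [hcard, Finset.mul_sum, Finset.sum_filter]
  rw [Finset.sum_comm]
  refine Finset.sum_congr rfl fun n hn => ?_
  simp only [← sum_log_primePow_eq_log_Nm hn, Finset.sum_filter, mul_boole]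

lemma sum_log_Nm_eq_sum_chebyshevPsi (x : ℝ) :
    ∑ m ∈ normLE (Nm N) x, Real.log (Nm N m)
      = ∑ m ∈ normLE (Nm N) x, chebyshevPsi N (x / Nm N m) := by
  simp only [chebyshevPsi, sum_log_Nm_eq_sum_log_mul_card]
  rw [sum_normLE_comm]
  simp [mul_comm]

lemma abs_le_mul_of_abs_sum_div_le {B K σ : ℝ} (hset : LinearGrowth (setNorm N) 1 B)
    (hσ : 0 ≤ σ) (hσ1 : σ < 1) {g : ℝ → ℝ}
    (hg : ∀ y, 1 ≤ y → |∑ m ∈ normLE (Nm N) y, g (y / Nm N m)| ≤ K * y ^ σ) {x : ℝ}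
    (hx : 1 ≤ x) : |g x| ≤ K * (2 * B / (1 - σ) * x) := by
  have hK : 0 ≤ K := by simpa using (abs_nonneg _).trans (hg 1 le_rfl)
  calc |g x| ≤ ∑ A ∈ normLE (setNorm N) x,
        |(-1 : ℝ) ^ A.card * ∑ m ∈ normLE (Nm N) (x / setNorm N A),
          g (x / setNorm N A / Nm N m)| := by
        rw [← sum_neg_one_pow_card_mul_sum_div (N := N) g hx]
        exact Finset.abs_sum_le_sum_abs _ _
    _ ≤ ∑ A ∈ normLE (setNorm N) x, K * (x / setNorm N A) ^ σ := by
        refine Finset.sum_le_sum fun A hA => ?_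
        rw [abs_mul, abs_pow, abs_neg, abs_one, one_pow, one_mul]
        exact hg _ (one_le_div_of_mem_normLE hA)
    _ ≤ K * (2 * B / (1 - σ) * x) := by
        rw [← Finset.mul_sum]
        gcongr
        simpa using hset.sum_mul_rpow_div_le hσ hσ1 (zero_lt_one.trans_le hx)

namespace EffectiveStar

-- The constant `b` cancels the terms linear in `y` left over from `ψ (y / m) - y / m`.
lemma exists_abs_sum_chebyshevPsi_sub_le (hE : EffectiveStar N κ τ C) {σ : ℝ} (hσ : τ < σ) :
    ∃ b K, ∀ y, 1 ≤ y →
      |∑ m ∈ normLE (Nm N) y, (chebyshevPsi N (y / Nm N m) - y / Nm N m - b)| ≤ K * y ^ σ := by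
  obtain ⟨K₁, hlog⟩ := hE.exists_abs_sum_log_sub_le hσ
  obtain ⟨c, K₂, hdiv⟩ := hE.exists_abs_sum_div_sub_le
  have hK₂ : 0 ≤ K₂ := by simpa using (abs_nonneg _).trans (hdiv 1 le_rfl)
  have hκ := hE.density_pos
  set b : ℝ := -(κ + c) / κ with hb
  have hbκ : b * κ = -(κ + c) := by rw [hb]; field_simp
  refine ⟨b, K₁ + K₂ + |b| * C, fun y hy => ?_⟩
  have hpow : y ^ τ ≤ y ^ σ := Real.rpow_le_rpow_of_exponent_le hy hσ.le
  have hsplit : ∑ m ∈ normLE (Nm N) y, (chebyshevPsi N (y / Nm N m) - y / Nm N m - b)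
      = (∑ m ∈ normLE (Nm N) y, Real.log (Nm N m) - (κ * y * Real.log y - κ * y))
        - (∑ m ∈ normLE (Nm N) y, y / Nm N m - (κ * y * Real.log y + c * y))
        - b * ((normLE (Nm N) y).card - κ * y) := by
    rw [sum_log_Nm_eq_sum_chebyshevPsi]
    simp only [Finset.sum_sub_distrib, Finset.sum_const, nsmul_eq_mul]
    linear_combination -y * hbκ
  have hcard : |b * ((normLE (Nm N) y).card - κ * y)| ≤ |b| * C * y ^ σ := by
    rw [abs_mul, mul_assoc]
    gcongr
    exact (hE.abs_card_sub_le y (by linarith)).trans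
      (mul_le_mul_of_nonneg_left hpow hE.error_nonneg)
  rw [hsplit, add_mul, add_mul]
  refine (abs_sub _ _).trans (add_le_add ((abs_sub _ _).trans (add_le_add (hlog y hy) ?_)) hcard)
  exact (hdiv y hy).trans (mul_le_mul_of_nonneg_left hpow hK₂)

theorem exists_linearGrowth_log_primePow (hE : EffectiveStar N κ τ C) :
    ∃ B, LinearGrowth (primePowNorm N) (fun q => Real.log (N q.1)) B := by
  obtain ⟨σ, hτσ, hσ1⟩ := exists_between hE.lt_one
  obtain ⟨b, K, hsum⟩ := hE.exists_abs_sum_chebyshevPsi_sub_le hτσ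
  have hψ := fun x => abs_le_mul_of_abs_sum_div_le (g := fun y => chebyshevPsi N y - y - b)
    hE.linearGrowth_setNorm (hE.exponent_pos.trans hτσ).le hσ1 hsum (x := x)
  set K' := K * (2 * (κ + C) / (1 - σ))
  simp only [← mul_assoc] at hψ
  have hK' : 0 ≤ K' := by simpa using (abs_nonneg _).trans (hψ 1 le_rfl)
  refine ⟨1 + |b| + K', fun q => Real.log_natCast_nonneg _, fun x hx => ?_⟩
  rcases lt_or_ge x 1 with hx1 | hx1
  · rw [normLE_eq_empty hx1, Finset.sum_empty]
    positivity
  have hbx : b ≤ |b| * x := (le_abs_self b).trans (le_mul_of_one_le_right (abs_nonneg b) hx1)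
  rw [← chebyshevPsi]
  linarith [le_of_abs_le (hψ x hx1)]

end EffectiveStar

end Chebyshev

section MertensOne

variable {P : Type*} {N : P → ℕ} [ArithmeticNorm N] {κ τ C : ℝ}

lemma sum_normLE_primePowNorm (f : P × ℕ → ℝ) (x : ℝ) :
    ∑ q ∈ normLE (primePowNorm N) x, f q
      = ∑ p ∈ normLE N x, f (p, 0) + ∑ q ∈ normLE (properPowNorm N) x, f (q.1, q.2 + 1) := by
  rw [← Finset.sum_filter_add_sum_filter_not _ fun q : P × ℕ => q.2 = 0]
  congr 1
  · refine Finset.sum_nbij' Prod.fst (fun p => (p, 0)) ?_ ?_ ?_ ?_ ?_ <;> try rintro ⟨p, _ | k⟩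
    all_goals simp +contextual [primePowNorm]
  · refine Finset.sum_nbij' (fun q => (q.1, q.2 - 1)) (fun q => (q.1, q.2 + 1)) ?_ ?_ ?_ ?_ ?_ <;>
      rintro ⟨p, _ | k⟩ <;> simp [primePowNorm, properPowNorm]

lemma sum_log_prime_le_chebyshevPsi (x : ℝ) :
    ∑ p ∈ normLE N x, Real.log (N p) ≤ chebyshevPsi N x := by
  rw [chebyshevPsi, sum_normLE_primePowNorm]
  exact le_add_of_nonneg_right (Finset.sum_nonneg fun q _ => Real.log_natCast_nonneg _)

lemma log_div_pow_le {a : ℝ} (ha : 2 ≤ a) (k : ℕ) :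
    Real.log a / a ^ (k + 2) ≤ 2 * a ^ (-(3 / 2) : ℝ) * (1 / 2) ^ k := by
  have ha0 : 0 < a := by linarith
  have hlog : Real.log a ≤ 2 * a ^ (1 / 2 : ℝ) := by
    linarith [Real.log_le_rpow_div ha0.le (by norm_num : (0 : ℝ) < 1 / 2)]
  calc Real.log a / a ^ (k + 2) ≤ 2 * a ^ (1 / 2 : ℝ) / a ^ (k + 2) := by gcongr
    _ = 2 * a ^ (-(3 / 2) : ℝ) * (1 / a) ^ k := by
        rw [show (-(3 / 2) : ℝ) = 1 / 2 - 2 by norm_num, Real.rpow_sub ha0, Real.rpow_two,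
          one_div_pow, pow_add]
        field_simp
    _ ≤ 2 * a ^ (-(3 / 2) : ℝ) * (1 / 2) ^ k := by gcongr

lemma summable_log_div_properPowNorm
    (hprime : Summable fun p => (N p : ℝ) ^ (-(3 / 2) : ℝ)) :
    Summable fun q : P × ℕ => Real.log (N q.1) / properPowNorm N q := by
  have hgeom : Summable fun k : ℕ => (1 / 2 : ℝ) ^ k :=
    summable_geometric_of_lt_one (by norm_num) (by norm_num)
  refine .of_nonneg_of_le (fun q => ?_) (fun q => ?_) ((hprime.mul_left 2).mul_of_nonneg hgeom
    (fun p => by positivity) fun k => by positivity)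
  · exact div_nonneg (Real.log_natCast_nonneg _) (Nat.cast_nonneg _)
  · rw [properPowNorm, Nat.cast_pow]
    exact log_div_pow_le (by exact_mod_cast ArithmeticNorm.two_le q.1) q.2

namespace EffectiveStar

theorem exists_linearGrowth_log_prime (hE : EffectiveStar N κ τ C) :
    ∃ B, LinearGrowth N (fun p => Real.log (N p)) B := by
  obtain ⟨B, hB⟩ := hE.exists_linearGrowth_log_primePow
  exact ⟨B, fun p => Real.log_natCast_nonneg _,
    fun x hx => (sum_log_prime_le_chebyshevPsi x).trans (hB.sum_le x hx)⟩

lemma abs_sum_log_mul_card_sub_le (hE : EffectiveStar N κ τ C) {B : ℝ}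
    (hB : LinearGrowth (primePowNorm N) (fun q => Real.log (N q.1)) B) {x : ℝ} (hx : 0 < x) :
    |∑ q ∈ normLE (primePowNorm N) x,
        Real.log (N q.1) * ((normLE (Nm N) (x / primePowNorm N q)).card
          - κ * (x / primePowNorm N q))| ≤ C * (2 * B / (1 - τ) * x) := by
  have hC := hE.error_nonneg
  calc _ ≤ ∑ q ∈ normLE (primePowNorm N) x,
        C * (Real.log (N q.1) * (x / primePowNorm N q) ^ τ) := by
        refine (Finset.abs_sum_le_sum_abs _ _).trans (Finset.sum_le_sum fun q _ => ?_)
        rw [abs_mul, abs_of_nonneg (hB.nonneg q), mul_left_comm]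
        exact mul_le_mul_of_nonneg_left
          (hE.abs_card_sub_le _ (div_pos hx (cast_norm_pos q))) (hB.nonneg q)
    _ ≤ C * (2 * B / (1 - τ) * x) := by
        rw [← Finset.mul_sum]
        gcongr
        exact hB.sum_mul_rpow_div_le hE.exponent_pos.le hE.lt_one hx

lemma exists_abs_sum_log_div_primePow_sub_le (hE : EffectiveStar N κ τ C) :
    ∃ B, ∀ x, 1 ≤ x →
      |∑ q ∈ normLE (primePowNorm N) x, Real.log (N q.1) / primePowNorm N q - Real.log x|
        ≤ B := by
  obtain ⟨B, hB⟩ := hE.exists_linearGrowth_log_primePow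
  obtain ⟨K, hK⟩ := hE.exists_abs_sum_log_sub_le hE.lt_one
  have hκ := hE.density_pos
  refine ⟨(K + κ + C * (2 * B / (1 - τ))) / κ, fun x hx => ?_⟩
  have hx0 : 0 < x := by linarith
  set U := ∑ q ∈ normLE (primePowNorm N) x, Real.log (N q.1) / primePowNorm N q
  set V := ∑ q ∈ normLE (primePowNorm N) x, Real.log (N q.1) *
    ((normLE (Nm N) (x / primePowNorm N q)).card - κ * (x / primePowNorm N q)) with hV
  have hsplit : ∑ m ∈ normLE (Nm N) x, Real.log (Nm N m) = κ * x * U + V := by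
    rw [sum_log_Nm_eq_sum_log_mul_card, hV, Finset.mul_sum, ← Finset.sum_add_distrib]
    exact Finset.sum_congr rfl fun q _ => by ring
  have hlog := abs_le.1 (hK x hx)
  rw [hsplit, Real.rpow_one] at hlog
  have hVx := abs_le.1 (hE.abs_sum_log_mul_card_sub_le hB hx0)
  have hscaled : |κ * x * (U - Real.log x)| ≤ (K + κ + C * (2 * B / (1 - τ))) * x := by
    have hκx : 0 ≤ κ * x := by positivity
    rw [abs_le]
    constructor <;> linarith
  rw [abs_mul, abs_of_pos (by positivity)] at hscaled
  rw [le_div_iff₀ hκ]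
  refine le_of_mul_le_mul_right ?_ hx0
  linarith

theorem exists_abs_sum_log_div_prime_sub_le (hE : EffectiveStar N κ τ C) :
    ∃ B, ∀ x, 1 ≤ x → |∑ p ∈ normLE N x, Real.log (N p) / N p - Real.log x| ≤ B := by
  obtain ⟨B, hB⟩ := hE.exists_abs_sum_log_div_primePow_sub_le
  have hsum := summable_log_div_properPowNorm (N := N)
    (hE.linearGrowth_prime.summable_rpow_neg (by norm_num))
  refine ⟨B + ∑' q, Real.log (N q.1) / properPowNorm N q, fun x hx => ?_⟩
  have hnonneg : ∀ q : P × ℕ, 0 ≤ Real.log (N q.1) / properPowNorm N q := fun q =>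
    div_nonneg (Real.log_natCast_nonneg _) (Nat.cast_nonneg _)
  have hproper : ∑ q ∈ normLE (properPowNorm N) x, Real.log (N q.1) / properPowNorm N q
      ≤ ∑' q, Real.log (N q.1) / properPowNorm N q :=
    hsum.sum_le_tsum _ fun q _ => hnonneg q
  have hproper0 : 0 ≤ ∑ q ∈ normLE (properPowNorm N) x, Real.log (N q.1) / properPowNorm N q :=
    Finset.sum_nonneg fun q _ => hnonneg q
  have hprimePow := hB x hx
  rw [sum_normLE_primePowNorm] at hprimePow
  simp only [primePowNorm, zero_add, pow_one, add_assoc, one_add_one_eq_two] at hprimePow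
  simp only [properPowNorm] at hproper hproper0 ⊢
  rw [abs_le] at hprimePow ⊢
  constructor <;> linarith

end EffectiveStar

end MertensOne

section MertensTwo

variable {ι : Type*} {ν : ι → ℕ} [CountingNorm ν]

-- Uses `log x = log (ν i) + log (x / ν i)`, the second term being absorbed by a larger exponent.
lemma exists_sum_rpow_div_le_div_log {B B' : ℝ} (hν : LinearGrowth ν 1 B)
    (hlog : LinearGrowth ν (fun i => Real.log (ν i)) B') {σ : ℝ} (hσ : 0 ≤ σ) (hσ1 : σ < 1) :
    ∃ K, ∀ x, 1 < x → ∑ i ∈ normLE ν x, (x / ν i) ^ σ ≤ K * (x / Real.log x) := by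
  obtain ⟨ρ, hσρ, hρ1⟩ := exists_between hσ1
  refine ⟨2 * B' / (1 - σ) + 2 * B / (1 - ρ) / (ρ - σ), fun x hx => ?_⟩
  have hx0 : 0 < x := by linarith
  have hsplit : ∀ i ∈ normLE ν x, Real.log x * (x / ν i) ^ σ
      ≤ Real.log (ν i) * (x / ν i) ^ σ + (x / ν i) ^ ρ / (ρ - σ) := fun i _ => by
    have hy : 0 < x / ν i := div_pos hx0 (cast_norm_pos i)
    have hlogx : Real.log x = Real.log (ν i) + Real.log (x / ν i) := by
      rw [Real.log_div hx0.ne' (cast_norm_pos i).ne', add_sub_cancel]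
    rw [hlogx, add_mul]
    gcongr
    calc Real.log (x / ν i) * (x / ν i) ^ σ
        ≤ (x / ν i) ^ (ρ - σ) / (ρ - σ) * (x / ν i) ^ σ := by
          gcongr
          exact Real.log_le_rpow_div hy.le (sub_pos.2 hσρ)
      _ = (x / ν i) ^ ρ / (ρ - σ) := by
          rw [div_mul_eq_mul_div, ← Real.rpow_add hy, sub_add_cancel]
  rw [mul_div_assoc', le_div_iff₀' (Real.log_pos hx), Finset.mul_sum]
  refine (Finset.sum_le_sum hsplit).trans ?_
  rw [Finset.sum_add_distrib, ← Finset.sum_div, add_mul]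
  refine add_le_add (hlog.sum_mul_rpow_div_le hσ hσ1 hx0) ?_
  have : 0 < ρ - σ := sub_pos.2 hσρ
  rw [div_mul_eq_mul_div (2 * B / (1 - ρ))]
  gcongr
  simpa using hν.sum_mul_rpow_div_le (hσ.trans hσρ.le) hρ1 hx0

lemma hasDerivAt_inv_log {t : ℝ} (ht : 1 < t) :
    HasDerivAt (fun t => (Real.log t)⁻¹) (-t⁻¹ / Real.log t ^ 2) t :=
  (Real.hasDerivAt_log (by linarith)).inv (Real.log_pos ht).ne'

lemma continuousOn_neg_inv_div_log_sq :
    ContinuousOn (fun t : ℝ => -t⁻¹ / Real.log t ^ 2) (Set.Ioi 1) := fun t (ht : 1 < t) => by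
  have ht0 : t ≠ 0 := by linarith
  exact ((continuousAt_inv₀ ht0).neg.div ((Real.continuousAt_log ht0).pow 2)
    (pow_pos (Real.log_pos ht) 2).ne').continuousWithinAt

lemma integral_inv_log_mul_inv {y x : ℝ} (hy : 1 < y) (hyx : y ≤ x) :
    ∫ t in y..x, (Real.log t)⁻¹ * t⁻¹ = Real.log (Real.log x) - Real.log (Real.log y) := by
  have hone_lt : ∀ t ∈ Set.uIcc y x, 1 < t := fun t ht =>
    hy.trans_le (Set.uIcc_of_le hyx ▸ ht).1
  refine intervalIntegral.integral_eq_sub_of_hasDerivAt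
    (f := fun t => Real.log (Real.log t)) (fun t ht => ?_) (ContinuousOn.intervalIntegrable
      fun t ht => ((hasDerivAt_inv_log (hone_lt t ht)).continuousAt.mul
        (continuousAt_inv₀ (by linarith [hone_lt t ht]))).continuousWithinAt)
  rw [inv_mul_eq_div]
  exact (Real.hasDerivAt_log (by linarith [hone_lt t ht])).log (Real.log_pos (hone_lt t ht)).ne'

lemma integral_abs_neg_inv_div_log_sq {y x : ℝ} (hy : 1 < y) (hyx : y ≤ x) :
    ∫ t in y..x, |-t⁻¹ / Real.log t ^ 2| = (Real.log y)⁻¹ - (Real.log x)⁻¹ := by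
  have hone_lt : ∀ t ∈ Set.uIcc y x, 1 < t := fun t ht =>
    hy.trans_le (Set.uIcc_of_le hyx ▸ ht).1
  have hftc : ∫ t in y..x, -t⁻¹ / Real.log t ^ 2 = (Real.log x)⁻¹ - (Real.log y)⁻¹ :=
    intervalIntegral.integral_eq_sub_of_hasDerivAt
      (fun t ht => hasDerivAt_inv_log (hone_lt t ht))
      (continuousOn_neg_inv_div_log_sq.mono hone_lt).intervalIntegrable
  rw [← neg_sub, ← hftc, ← intervalIntegral.integral_neg]
  refine intervalIntegral.integral_congr fun t ht => ?_
  have ht0 : 0 ≤ t := by linarith [hone_lt t ht]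
  exact abs_of_nonpos (div_nonpos_of_nonpos_of_nonneg (by simpa using ht0) (sq_nonneg _))

lemma abs_sum_inv_sub_log_log_sub_le (hν : ∀ i, 2 ≤ ν i) {B : ℝ}
    (hB : ∀ x, 1 ≤ x → |∑ i ∈ normLE ν x, Real.log (ν i) / ν i - Real.log x| ≤ B)
    {y x : ℝ} (hy : 1 < y) (hyx : y ≤ x) :
    |(∑ i ∈ normLE ν x, (ν i : ℝ)⁻¹ - Real.log (Real.log x))
        - (∑ i ∈ normLE ν y, (ν i : ℝ)⁻¹ - Real.log (Real.log y))| ≤ 2 * B / Real.log y := by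
  have hone_lt : ∀ t ∈ Set.Icc y x, 1 < t := fun t ht => hy.trans_le ht.1
  have hne : ∀ t ∈ Set.Icc y x, t ≠ 0 := fun t ht => by linarith [hone_lt t ht]
  have habel := abs_sum_normLE_mul_sub_integral_le (ν := ν) (fun i => Real.log (ν i) / ν i)
    (M := Real.log) (M' := fun t => t⁻¹) (E := fun _ => B) (by linarith) hyx
    (fun t ht => hasDerivAt_inv_log (hone_lt t ht))
    (continuousOn_neg_inv_div_log_sq.mono hone_lt) (fun t ht => Real.hasDerivAt_log (hne t ht))
    (continuousOn_id.inv₀ hne) continuousOn_const (fun t ht => hB t (hone_lt t ht).le)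
  have hweight : ∀ i, Real.log (ν i) / ν i * (Real.log (ν i))⁻¹ = (ν i : ℝ)⁻¹ := fun i => by
    have hlogν : Real.log (ν i) ≠ 0 := (Real.log_pos (by exact_mod_cast hν i)).ne'
    field_simp
  simp only [hweight, integral_inv_log_mul_inv hy hyx, intervalIntegral.integral_mul_const,
    integral_abs_neg_inv_div_log_sq hy hyx] at habel
  rw [abs_of_pos (inv_pos.2 (Real.log_pos (hy.trans_le hyx))),
    abs_of_pos (inv_pos.2 (Real.log_pos hy))] at habel
  rw [sub_sub_sub_comm, div_eq_mul_inv]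
  linarith

variable {P : Type*} {N : P → ℕ} [ArithmeticNorm N] {κ τ C : ℝ}

lemma IsMertens.tendsto_sum_inv {A : ℝ} (hA : IsMertens N A) :
    Tendsto (fun x : ℝ => ∑ p ∈ normLE N x, (N p : ℝ)⁻¹ - Real.log (Real.log x)) atTop (𝓝 A) := by
  refine hA.congr fun x => ?_
  rw [← coe_normLE, finsum_mem_coe_finset]
  simp only [one_div]

theorem EffectiveStar.exists_abs_sum_inv_prime_sub_le (hE : EffectiveStar N κ τ C) {A : ℝ}
    (hA : IsMertens N A) :
    ∃ K, ∀ x, 1 < x →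
      |∑ p ∈ normLE N x, (N p : ℝ)⁻¹ - (Real.log (Real.log x) + A)| ≤ K / Real.log x := by
  obtain ⟨B, hB⟩ := hE.exists_abs_sum_log_div_prime_sub_le
  refine ⟨2 * B, fun y hy => ?_⟩
  rw [← sub_sub, abs_sub_comm]
  refine le_of_tendsto (hA.tendsto_sum_inv.sub_const _).abs
    ((eventually_ge_atTop y).mono fun x hx => ?_)
  exact abs_sum_inv_sub_log_log_sub_le ArithmeticNorm.two_le hB hy hx

end MertensTwo

section HFreeCounts

variable {P : Type*} {N : P → ℕ} [ArithmeticNorm N] {h : ℕ}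

/-- The number of `h`-free elements of norm at most `x`, i.e. the cardinality of `S_h(x)`. -/
def hFreeCount (N : P → ℕ) [ArithmeticNorm N] (h : ℕ) (x : ℝ) : ℕ :=
  Finset.card {m ∈ normLE (Nm N) x | HFree h m}

/-- The number of `h`-free elements of norm at most `x` divisible by the prime `p`. -/
def hFreeMultipleCount (N : P → ℕ) [ArithmeticNorm N] (h : ℕ) (p : P) (x : ℝ) : ℕ :=
  Finset.card {m ∈ normLE (Nm N) x | HFree h m ∧ 1 ≤ m p}

lemma hasSum_neg_one_pow_card_mul_card_normLE (hh : 1 ≤ h) (x : ℝ) :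
    HasSum (fun A : Finset P =>
      (-1 : ℝ) ^ A.card * (normLE (Nm N) (x / (setNorm N A : ℝ) ^ h)).card)
      (hFreeCount N h x) := by
  have hsieve := sum_neg_one_pow_card_mul_sum_eq_sum_hFree (N := N) hh (fun _ => 1) x
  simp only [Finset.sum_const, nsmul_eq_mul, mul_one] at hsieve
  rw [hFreeCount, ← hsieve]
  refine hasSum_sum_of_ne_finset_zero (L := SummationFilter.unconditional _) fun A hA => ?_
  rw [mem_normLE, not_le] at hA
  have hpow : (setNorm N A : ℝ) ≤ (setNorm N A : ℝ) ^ h :=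
    le_self_pow₀ (one_le_cast_norm A) (by omega)
  rw [normLE_eq_empty, Finset.card_empty, Nat.cast_zero, mul_zero]
  exact (div_lt_one (pow_pos (cast_norm_pos A) h)).2 (hA.trans_le hpow)

theorem EffectiveStar.exists_abs_hFreeCount_sub_le {κ τ C : ℝ} (hE : EffectiveStar N κ τ C)
    (hh : 2 ≤ h) :
    ∃ K, ∀ x, 0 < x → |(hFreeCount N h x - κ / zetaM N h * x : ℝ)| ≤ K * x ^ τ := by
  have hh' : (2 : ℝ) ≤ h := by exact_mod_cast hh
  have hτ := hE.half_lt
  have hinv := hasSum_neg_one_pow_card_mul_setNorm_rpow_neg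
    (hE.linearGrowth_Nm.summable_rpow_neg (s := h) (by linarith))
  have hsum := (hE.linearGrowth_setNorm.summable_rpow_neg (s := h * τ) (by nlinarith)).hasSum
  refine ⟨C * ∑' A, (setNorm N A : ℝ) ^ (-(h * τ)), fun x hx => ?_⟩
  have hdiff := (hasSum_neg_one_pow_card_mul_card_normLE (N := N) (h := h) (by omega) x).sub
    (hinv.mul_left (κ * x))
  rw [div_mul_eq_mul_div, div_eq_mul_inv, ← hdiff.tsum_eq, mul_right_comm, ← Real.norm_eq_abs]
  refine tsum_of_norm_bounded (hsum.mul_left (C * x ^ τ)) fun A => ?_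
  have hA : (0 : ℝ) < setNorm N A := cast_norm_pos A
  have hbound := hE.abs_card_sub_le (x / (setNorm N A : ℝ) ^ h) (by positivity)
  have hrpow : (x / (setNorm N A : ℝ) ^ h) ^ τ = x ^ τ * (setNorm N A : ℝ) ^ (-(h * τ)) := by
    rw [Real.div_rpow hx.le (by positivity), Real.rpow_neg hA.le, Real.rpow_mul hA.le,
      Real.rpow_natCast, div_eq_mul_inv]
  rw [mul_left_comm, ← mul_sub, norm_mul, norm_pow, norm_neg, norm_one, one_pow, one_mul,
    Real.norm_eq_abs, Real.rpow_neg hA.le, Real.rpow_natCast, mul_assoc κ, ← div_eq_mul_inv,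
    mul_assoc C, ← hrpow]
  exact hbound

lemma hFree_tsub_single_iff {m : P →₀ ℕ} {p : P} {k : ℕ} :
    HFree h (m - Finsupp.single p k) ↔ m p - k ≤ h - 1 ∧ HFree h (m.erase p) := by
  constructor
  · intro hm
    refine ⟨by simpa using hm p, fun q => ?_⟩
    have hq := hm q
    rcases eq_or_ne q p with rfl | hqp
    · simp
    · simpa [Finsupp.erase_ne hqp, hqp.symm] using hq
  · rintro ⟨hp, hm⟩ q
    have hq := hm q
    rcases eq_or_ne q p with rfl | hqp
    · simpa using hp
    · simpa [Finsupp.erase_ne hqp, hqp.symm] using hq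

lemma card_filter_normLE_div_pow (Q : (P →₀ ℕ) → Prop) [DecidablePred Q] (p : P) (k : ℕ)
    (x : ℝ) :
    Finset.card {m ∈ normLE (Nm N) (x / (N p : ℝ) ^ k) | Q m}
      = Finset.card {n ∈ normLE (Nm N) x | k ≤ n p ∧ Q (n - Finsupp.single p k)} := by
  have hshift := sum_normLE_div_add (N := N)
    (fun n => if Q (n - Finsupp.single p k) then 1 else 0) (Finsupp.single p k) x
  simp only [add_tsub_cancel_right, Nm_single, Nat.cast_pow, Finsupp.single_le_iff] at hshift
  rw [Finset.sum_boole, Finset.sum_boole, Finset.filter_filter] at hshift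
  exact_mod_cast hshift

-- Adding `p` to an `h`-free `m` leaves the `h`-free elements exactly when `m p = h - 1`, that is,
-- when the sum is `n + h • p` with `n` an `h`-free nonmultiple of `p`.
lemma hFreeMultipleCount_add_hFreeCount (hh : 1 ≤ h) (p : P) (x : ℝ) :
    hFreeMultipleCount N h p x + hFreeCount N h (x / (N p : ℝ) ^ h)
      = hFreeCount N h (x / N p) + hFreeMultipleCount N h p (x / (N p : ℝ) ^ h) := by
  have hone := card_filter_normLE_div_pow (N := N) (HFree h) p 1 x
  rw [pow_one] at hone
  rw [hFreeMultipleCount, hFreeCount, hFreeCount, hFreeMultipleCount, hone,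
    card_filter_normLE_div_pow, card_filter_normLE_div_pow]
  simp only [Finset.card_filter, ← Finset.sum_add_distrib]
  refine Finset.sum_congr rfl fun n _ => ?_
  have hfree : HFree h n ↔ n p ≤ h - 1 ∧ HFree h (n.erase p) := by
    simpa using hFree_tsub_single_iff (h := h) (m := n) (p := p) (k := 0)
  simp only [hfree, hFree_tsub_single_iff, Finsupp.tsub_apply, Finsupp.single_eq_same]
  by_cases herase : HFree h (n.erase p)
  · simp only [herase, and_true]
    split_ifs <;> omega
  · simp [herase]

lemma cast_norm_le_of_mem_normLE {m : P →₀ ℕ} {p : P} {x : ℝ} (hm : m ∈ normLE (Nm N) x)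
    (hp : 1 ≤ m p) : (N p : ℝ) ≤ x := by
  refine le_trans ?_ (mem_normLE.1 hm)
  simpa using Nat.cast_le (α := ℝ).2 (Nm_mono (N := N) (Finsupp.single_le_iff.2 hp))

lemma hFreeMultipleCount_eq_zero {p : P} {x : ℝ} (hx : x < N p) :
    hFreeMultipleCount N h p x = 0 := by
  rw [hFreeMultipleCount, Finset.card_eq_zero, Finset.filter_eq_empty_iff]
  exact fun m hm hfree => hx.not_ge (cast_norm_le_of_mem_normLE hm hfree.2)

theorem finsum_omegaM_eq_sum_hFreeMultipleCount (N : P → ℕ) [ArithmeticNorm N] (h : ℕ) (x : ℝ) :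
    ∑ᶠ m ∈ {m : P →₀ ℕ | HFree h m ∧ (Nm N m : ℝ) ≤ x}, (omegaM m : ℝ)
      = ∑ p ∈ normLE N x, (hFreeMultipleCount N h p x : ℝ) := by
  have hset : {m : P →₀ ℕ | HFree h m ∧ (Nm N m : ℝ) ≤ x}
      = ({m ∈ normLE (Nm N) x | HFree h m} : Finset (P →₀ ℕ)) := by
    ext m
    simp [and_comm]
  have homega : ∀ m ∈ normLE (Nm N) x,
      omegaM m = ∑ p ∈ normLE N x, if 1 ≤ m p then 1 else 0 := fun m hm => by
    rw [omegaM, ← Finset.card_filter]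
    congr 1
    ext p
    rw [Finsupp.mem_support_iff, ← Nat.one_le_iff_ne_zero, Finset.mem_filter, mem_normLE]
    exact ⟨fun hp => ⟨cast_norm_le_of_mem_normLE hm hp, hp⟩, And.right⟩
  rw [hset, finsum_mem_coe_finset, ← Nat.cast_sum, ← Nat.cast_sum,
    Finset.sum_congr rfl fun m hm => homega m (Finset.mem_of_mem_filter m hm), Finset.sum_comm]
  simp only [hFreeMultipleCount, ← Finset.filter_filter, Finset.card_filter _ (Finset.filter _ _)]

end HFreeCounts

section PrimeMultiples

/-- The density of the `h`-free elements divisible by a prime of norm `q`, relative to all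
`h`-free elements, is `q⁻¹ - hFreeDefect h q`. -/
def hFreeDefect (h : ℕ) (q : ℝ) : ℝ := (q - 1) / (q * (q ^ h - 1))

lemma hFreeDefect_nonneg {q : ℝ} (hq : 1 ≤ q) (h : ℕ) : 0 ≤ hFreeDefect h q := by
  have hpow : 1 ≤ q ^ h := one_le_pow₀ hq
  exact div_nonneg (by linarith) (mul_nonneg (by linarith) (by linarith))

lemma hFreeDefect_le {h : ℕ} (hh : 2 ≤ h) {q : ℝ} (hq : 1 < q) : hFreeDefect h q ≤ (q ^ 2)⁻¹ := by
  have hpow : q ^ 2 ≤ q ^ h := pow_le_pow_right₀ hq.le hh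
  have : 0 < q := by linarith
  have hqh : 0 < q ^ h - 1 := by nlinarith
  rw [hFreeDefect, ← one_div, div_le_div_iff₀ (by positivity) (by positivity)]
  nlinarith

lemma inv_sub_hFreeDefect_eq {h : ℕ} (hh : h ≠ 0) {q : ℝ} (hq : 1 < q) :
    q⁻¹ - hFreeDefect h q = q⁻¹ - (q ^ h)⁻¹ + (q⁻¹ - hFreeDefect h q) / q ^ h := by
  have hq0 : q ≠ 0 := by linarith
  have hqh : q ^ h - 1 ≠ 0 := sub_ne_zero.2 (one_lt_pow₀ hq hh).ne'
  rw [hFreeDefect]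
  field_simp
  ring

lemma abs_le_mul_rpow_of_abs_le_add_abs_div {E : ℝ → ℝ} {a b r τ : ℝ} (ha : 0 ≤ a) (hr : 1 < r)
    (hrτ : 2 ≤ r ^ τ) (hsmall : ∀ x, 0 < x → x < 1 → |E x| ≤ b * x ^ τ)
    (hrec : ∀ x, 0 < x → |E x| ≤ a * x ^ τ + |E (x / r)|) {x : ℝ} (hx : 0 < x) :
    |E x| ≤ (b + 2 * a) * x ^ τ := by
  have hr0 : 0 < r := by linarith
  have hb : 0 ≤ b := nonneg_of_mul_nonneg_left
    ((abs_nonneg _).trans (hsmall (1 / 2) (by norm_num) (by norm_num))) (by positivity)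
  obtain ⟨n, hn⟩ := pow_unbounded_of_one_lt x hr
  induction n generalizing x with
  | zero =>
    refine (hsmall x hx (by simpa using hn)).trans ?_
    gcongr
    linarith
  | succ n ih =>
    have hdiv := ih (div_pos hx hr0) (by rwa [div_lt_iff₀ hr0, ← pow_succ])
    have hhalf : (x / r) ^ τ ≤ x ^ τ / 2 := by
      rw [Real.div_rpow hx.le hr0.le]
      gcongr
    have hbx : 0 ≤ b * x ^ τ := by positivity
    calc |E x| ≤ a * x ^ τ + |E (x / r)| := hrec x hx
      _ ≤ a * x ^ τ + (b + 2 * a) * (x ^ τ / 2) := by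
        gcongr
        exact hdiv.trans (by gcongr)
      _ ≤ (b + 2 * a) * x ^ τ := by linarith

lemma two_le_pow_rpow {q τ : ℝ} (hq : 2 ≤ q) (hτ : 1 / 2 ≤ τ) {h : ℕ} (hh : 2 ≤ h) :
    2 ≤ (q ^ h) ^ τ := by
  have hh' : (2 : ℝ) ≤ h := by exact_mod_cast hh
  calc (2 : ℝ) ≤ q := hq
    _ ≤ q ^ (h * τ) := Real.self_le_rpow_of_one_le (by linarith) (by nlinarith)
    _ = (q ^ h) ^ τ := by rw [Real.rpow_natCast_mul (by linarith)]

variable {P : Type*} {N : P → ℕ} [ArithmeticNorm N] {h : ℕ}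

lemma one_lt_cast_prime_norm (p : P) : (1 : ℝ) < N p := by
  exact_mod_cast ArithmeticNorm.two_le p

lemma abs_hFreeMultipleCount_sub_le_add (hh : 1 ≤ h) {c K τ : ℝ} (hK : 0 ≤ K) (hτ : 0 ≤ τ)
    (hS : ∀ x, 0 < x → |hFreeCount N h x - c * x| ≤ K * x ^ τ) (p : P) {y : ℝ} (hy : 0 < y) :
    |hFreeMultipleCount N h p (N p * y)
        - c * ((N p : ℝ)⁻¹ - hFreeDefect h (N p)) * (N p * y)|
      ≤ 2 * K * y ^ τ
        + |hFreeMultipleCount N h p (N p * (y / (N p : ℝ) ^ h))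
          - c * ((N p : ℝ)⁻¹ - hFreeDefect h (N p)) * (N p * (y / (N p : ℝ) ^ h))| := by
  have hq := one_lt_cast_prime_norm (N := N) p
  have hdensity := inv_sub_hFreeDefect_eq (h := h) (by omega) hq
  have hrec : (hFreeMultipleCount N h p (N p * y) : ℝ)
      + hFreeCount N h (N p * (y / (N p : ℝ) ^ h))
      = hFreeCount N h y + hFreeMultipleCount N h p (N p * (y / (N p : ℝ) ^ h)) := by
    have hrec := hFreeMultipleCount_add_hFreeCount (N := N) (h := h) (by omega) p (N p * y)
    rw [mul_div_cancel_left₀ _ (by positivity), mul_div_assoc] at hrec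
    exact_mod_cast hrec
  set q := (N p : ℝ)
  set a := q⁻¹ - hFreeDefect h q
  have hq0 : 0 < q := by linarith
  have hz0 : 0 < q * (y / q ^ h) := by positivity
  have hzy : q * (y / q ^ h) ≤ y := by
    rw [mul_div_left_comm]
    exact mul_le_of_le_one_right hy.le ((div_le_one (by positivity)).2
      (le_self_pow₀ hq.le (by omega)))
  have hSz : |hFreeCount N h (q * (y / q ^ h)) - c * (q * (y / q ^ h))| ≤ K * y ^ τ :=
    (hS _ hz0).trans (by gcongr)
  have hsplit : hFreeMultipleCount N h p (q * y) - c * a * (q * y)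
      = ((hFreeCount N h y - c * y)
          - (hFreeCount N h (q * (y / q ^ h)) - c * (q * (y / q ^ h))))
        + (hFreeMultipleCount N h p (q * (y / q ^ h)) - c * a * (q * (y / q ^ h))) := by
    linear_combination hrec - c * q * y * hdensity - c * y * mul_inv_cancel₀ hq0.ne'
  rw [hsplit]
  refine (abs_add_le _ _).trans (add_le_add_left ((abs_sub _ _).trans ?_) _)
  linarith [hS y hy]

theorem abs_hFreeMultipleCount_sub_le (hh : 2 ≤ h) {c K τ : ℝ} (hc : 0 ≤ c) (hτ : 1 / 2 ≤ τ)
    (hτ1 : τ ≤ 1) (hS : ∀ x, 0 < x → |hFreeCount N h x - c * x| ≤ K * x ^ τ) (p : P) {x : ℝ}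
    (hx : 0 < x) :
    |hFreeMultipleCount N h p x - c * ((N p : ℝ)⁻¹ - hFreeDefect h (N p)) * x|
      ≤ (c + 4 * K) * (x / N p) ^ τ := by
  have hK : 0 ≤ K := by simpa using (abs_nonneg _).trans (hS 1 one_pos)
  have hq := one_lt_cast_prime_norm (N := N) p
  have hq0 : (0 : ℝ) < N p := by linarith
  have hdensity : (N p * ((N p : ℝ)⁻¹ - hFreeDefect h (N p)) : ℝ) ∈ Set.Icc 0 1 := by
    have hdefect := (hFreeDefect_le hh hq).trans (inv_anti₀ hq0 (le_self_pow₀ hq.le two_ne_zero))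
    refine ⟨mul_nonneg hq0.le (sub_nonneg.2 hdefect), ?_⟩
    rw [← mul_inv_cancel₀ hq0.ne']
    gcongr
    exact sub_le_self _ (hFreeDefect_nonneg hq.le h)
  have hsmall : ∀ y : ℝ, 0 < y → y < 1 → |hFreeMultipleCount N h p (N p * y)
      - c * ((N p : ℝ)⁻¹ - hFreeDefect h (N p)) * (N p * y)| ≤ c * y ^ τ := fun y hy hy1 => by
    have hyτ : y ≤ y ^ τ := by simpa using Real.rpow_le_rpow_of_exponent_ge hy hy1.le hτ1
    rw [hFreeMultipleCount_eq_zero (mul_lt_of_lt_one_right hq0 hy1), Nat.cast_zero, zero_sub,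
      abs_neg, mul_assoc, ← mul_assoc _ (N p : ℝ) y, mul_comm _ (N p : ℝ),
      abs_of_nonneg (mul_nonneg hc (mul_nonneg hdensity.1 hy.le))]
    gcongr
    exact (mul_le_of_le_one_left hy.le hdensity.2).trans hyτ
  have hbound := abs_le_mul_rpow_of_abs_le_add_abs_div
    (E := fun y => hFreeMultipleCount N h p (N p * y)
      - c * ((N p : ℝ)⁻¹ - hFreeDefect h (N p)) * (N p * y))
    (mul_nonneg zero_le_two hK) (one_lt_pow₀ hq (by omega))
    (two_le_pow_rpow (by exact_mod_cast ArithmeticNorm.two_le p) hτ hh) hsmall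
    (fun y hy => abs_hFreeMultipleCount_sub_le_add (by omega) hK (by linarith) hS p hy)
    (div_pos hx hq0)
  rw [mul_div_cancel₀ x hq0.ne'] at hbound
  exact hbound.trans_eq (by ring)

end PrimeMultiples

section FirstMoment

lemma LinearGrowth.exists_abs_tsum_sub_sum_le_div_log {ι : Type*} {ν : ι → ℕ} [CountingNorm ν]
    {B s : ℝ} (hν : LinearGrowth ν 1 B) (hs : 1 < s) {b : ι → ℝ}
    (hb : ∀ i, |b i| ≤ (ν i : ℝ) ^ (-s)) :
    ∃ K, ∀ x, 1 < x → |∑' i, b i - ∑ i ∈ normLE ν x, b i| ≤ K / Real.log x := by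
  obtain ⟨t, ht, hts⟩ := exists_between hs
  have hst : 0 < s - t := sub_pos.2 hts
  have hsum := hν.summable_rpow_neg ht
  have hbsum : Summable b := .of_norm_bounded (hν.summable_rpow_neg hs) hb
  refine ⟨(∑' i, (ν i : ℝ) ^ (-t)) / (s - t), fun x hx => ?_⟩
  have hx0 : 0 < x := by linarith
  rw [← hbsum.sum_add_tsum_compl (s := normLE ν x), add_sub_cancel_left, ← Real.norm_eq_abs]
  have hbound : ∀ i : ↥((normLE ν x : Set ι)ᶜ),
      ‖b i‖ ≤ x ^ (-(s - t)) * (ν i : ℝ) ^ (-t) := fun i => by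
    have hxi : x ≤ ν i := (not_le.1 fun hi => i.2 (Finset.mem_coe.2 (mem_normLE.2 hi))).le
    calc ‖b i‖ ≤ (ν i : ℝ) ^ (-s) := hb i
      _ = (ν i : ℝ) ^ (-(s - t)) * (ν i : ℝ) ^ (-t) := by
        rw [← Real.rpow_add (cast_norm_pos _)]
        ring_nf
      _ ≤ x ^ (-(s - t)) * (ν i : ℝ) ^ (-t) :=
        mul_le_mul_of_nonneg_right
          (Real.rpow_le_rpow_of_nonpos hx0 hxi (by linarith)) (by positivity)
  have hlog : x ^ (-(s - t)) ≤ 1 / ((s - t) * Real.log x) := by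
    rw [Real.rpow_neg hx0.le, ← one_div]
    refine one_div_le_one_div_of_le (mul_pos hst (Real.log_pos hx)) ?_
    exact (le_div_iff₀' hst).1 (Real.log_le_rpow_div hx0.le hst)
  calc ‖∑' i : ↥((normLE ν x : Set ι)ᶜ), b i‖
      ≤ x ^ (-(s - t)) * ∑' i : ↥((normLE ν x : Set ι)ᶜ), (ν i : ℝ) ^ (-t) :=
        tsum_of_norm_bounded ((hsum.subtype _).hasSum.mul_left _) hbound
    _ ≤ 1 / ((s - t) * Real.log x) * ∑' i, (ν i : ℝ) ^ (-t) := by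
        have := Real.log_pos hx
        gcongr
        exact hsum.tsum_subtype_le _ _ fun i => by positivity
    _ = (∑' i, (ν i : ℝ) ^ (-t)) / (s - t) / Real.log x := by
        rw [one_div, div_div, inv_mul_eq_div]

variable {P : Type*} {N : P → ℕ} [ArithmeticNorm N] {κ τ C : ℝ} {h : ℕ}

lemma EffectiveStar.exists_abs_tsum_hFreeDefect_sub_sum_le (hE : EffectiveStar N κ τ C)
    (hh : 2 ≤ h) :
    ∃ K, ∀ x, 1 < x → |∑' p, hFreeDefect h (N p) - ∑ p ∈ normLE N x, hFreeDefect h (N p)|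
      ≤ K / Real.log x := by
  refine hE.linearGrowth_prime.exists_abs_tsum_sub_sum_le_div_log one_lt_two fun p => ?_
  have hp := one_lt_cast_prime_norm (N := N) p
  rw [abs_of_nonneg (hFreeDefect_nonneg hp.le h), Real.rpow_neg (Nat.cast_nonneg _),
    Real.rpow_two]
  exact hFreeDefect_le hh hp

lemma EffectiveStar.exists_abs_sum_hFreeMultipleCount_sub_le (hE : EffectiveStar N κ τ C)
    (hh : 2 ≤ h) :
    ∃ K, ∀ x, 1 < x → |∑ p ∈ normLE N x, (hFreeMultipleCount N h p x : ℝ)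
        - κ / zetaM N h * x * (∑ p ∈ normLE N x, (N p : ℝ)⁻¹
          - ∑ p ∈ normLE N x, hFreeDefect h (N p))|
      ≤ K * (x / Real.log x) := by
  obtain ⟨K, hK⟩ := hE.exists_abs_hFreeCount_sub_le hh
  obtain ⟨B, hB⟩ := hE.exists_linearGrowth_log_prime
  obtain ⟨L, hL⟩ := exists_sum_rpow_div_le_div_log hE.linearGrowth_prime hB hE.exponent_pos.le
    hE.lt_one
  have hh' : (1 : ℝ) < h := by exact_mod_cast hh
  have hc : 0 ≤ κ / zetaM N h := (div_pos hE.density_pos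
    (zetaM_pos (hE.linearGrowth_Nm.summable_rpow_neg hh'))).le
  have hK0 : 0 ≤ K := by simpa using (abs_nonneg _).trans (hK 1 one_pos)
  refine ⟨(κ / zetaM N h + 4 * K) * L, fun x hx => ?_⟩
  rw [← Finset.sum_sub_distrib, Finset.mul_sum, ← Finset.sum_sub_distrib]
  calc _ ≤ ∑ p ∈ normLE N x, (κ / zetaM N h + 4 * K) * (x / N p) ^ τ := by
        refine (Finset.abs_sum_le_sum_abs _ _).trans (Finset.sum_le_sum fun p _ => ?_)
        rw [mul_right_comm]
        exact abs_hFreeMultipleCount_sub_le hh hc hE.half_lt.le hE.lt_one.le hK p (by linarith)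
    _ ≤ (κ / zetaM N h + 4 * K) * L * (x / Real.log x) := by
        rw [← Finset.mul_sum, mul_assoc]
        exact mul_le_mul_of_nonneg_left (hL x hx) (by positivity)

theorem EffectiveStar.exists_abs_finsum_omegaM_sub_le (hE : EffectiveStar N κ τ C)
    (hh : 2 ≤ h) {A : ℝ} (hA : IsMertens N A) :
    ∃ K, ∀ x, 1 < x →
      |∑ᶠ m ∈ {m : P →₀ ℕ | HFree h m ∧ (Nm N m : ℝ) ≤ x}, (omegaM m : ℝ)
          - κ / zetaM N h * (x * Real.log (Real.log x))
          - κ * C1const N h A / zetaM N h * x| ≤ K * (x / Real.log x) := by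
  obtain ⟨K₁, hcount⟩ := hE.exists_abs_sum_hFreeMultipleCount_sub_le hh
  obtain ⟨K₂, hmertens⟩ := hE.exists_abs_sum_inv_prime_sub_le hA
  obtain ⟨K₃, htail⟩ := hE.exists_abs_tsum_hFreeDefect_sub_sum_le hh
  refine ⟨K₁ + |κ / zetaM N h| * (K₂ + K₃), fun x hx => ?_⟩
  have hC1 : C1const N h A = A - ∑' p, hFreeDefect h (N p) := rfl
  rw [finsum_omegaM_eq_sum_hFreeMultipleCount, hC1]
  set D := ∑ p ∈ normLE N x, (hFreeMultipleCount N h p x : ℝ)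
  set M := ∑ p ∈ normLE N x, (N p : ℝ)⁻¹
  set b := ∑ p ∈ normLE N x, hFreeDefect h (N p)
  set c := κ / zetaM N h
  calc _ = |(D - c * x * (M - b)) + c * x * (M - (Real.log (Real.log x) + A)
          + (∑' p, hFreeDefect h (N p) - b))| := by
        congr 1
        ring
    _ ≤ K₁ * (x / Real.log x) + |c| * x * (K₂ / Real.log x + K₃ / Real.log x) := by
        refine (abs_add_le _ _).trans (add_le_add (hcount x hx) ?_)
        rw [abs_mul, abs_mul, abs_of_pos (by linarith : 0 < x)]
        have := (abs_add_le _ _).trans (add_le_add (hmertens x hx) (htail x hx))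
        gcongr
    _ = (K₁ + |c| * (K₂ + K₃)) * (x / Real.log x) := by ring

end FirstMoment

/-- First moment of `ω` over `h`-free elements. -/
theorem first_moment_omega_hfree {P : Type*} [Countable P] (N : P → ℕ)
    (hN : ∀ p, 2 ≤ N p) (κ θ : ℝ) (hstar : StarCond N κ θ)
    (A : ℝ) (hA : IsMertens N A) (h : ℕ) (hh : 2 ≤ h) :
    (fun x : ℝ =>
        (∑ᶠ m ∈ {m : P →₀ ℕ | HFree h m ∧ (Nm N m : ℝ) ≤ x}, (omegaM m : ℝ))
          - κ / zetaM N h * (x * Real.log (Real.log x))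
          - κ * C1const N h A / zetaM N h * x)
      =O[atTop] fun x : ℝ => x / Real.log x := by
  have := hstar.arithmeticNorm hN
  obtain ⟨C, hE⟩ := hstar.exists_effectiveStar (le_max_left θ (3 / 4))
    (lt_max_of_lt_right (by norm_num)) (max_lt hstar.2.2.1 (by norm_num))
  obtain ⟨K, hK⟩ := hE.exists_abs_finsum_omegaM_sub_le hh hA
  refine IsBigO.of_bound K ((eventually_gt_atTop 1).mono fun x hx => ?_)
  have hpos : 0 < x / Real.log x := div_pos (by linarith) (Real.log_pos hx)
  rw [Real.norm_eq_abs, Real.norm_of_nonneg hpos.le]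
  exact hK x hx
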